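/- arXiv:1110.0807 — 3 statements merged into one kernel-verified Lean document; each statement's English description precedes it below -/
import Mathlib

section
/- Let f_n : S_n → ℝ be a sequence of class functions whose distributions under P_n converge weakly to some limit law μ. Then for every α ∈ ℝ and every β ∈ ℝ which is a continuity point of the distribution function of μ, lim_{n→∞} ( P_n[ρ̃_∞(σ) ≤ α, f_n(σ) < β] − P_n[ρ̃_∞(σ) ≤ α]·P_n[f_n(σ) < β] ) = 0, where ρ̃_∞ = (n − ρ_∞)/√n; i.e., Spearman's uniform metric is asymptotically independent of any weakly convergent sequence of class functions. -/
open scoped BigOperators Classical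
open Finset Filter

/-- Probability of an event under the uniform measure on `S_n`. -/
noncomputable def Pn {n : ℕ} (p : Equiv.Perm (Fin n) → Prop) : ℝ :=
  ((Finset.univ.filter p).card : ℝ) / (Fintype.card (Equiv.Perm (Fin n)) : ℝ)

/-- Expectation under the uniform measure on `S_n`. -/
noncomputable def En {n : ℕ} (g : Equiv.Perm (Fin n) → ℝ) : ℝ :=
  (∑ σ : Equiv.Perm (Fin n), g σ) / (Fintype.card (Equiv.Perm (Fin n)) : ℝ)

/-- Spearman's uniform metric `ρ_∞(σ) = max_i |σ(i) − i|` (as a natural number). -/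
def rhoInf {n : ℕ} (σ : Equiv.Perm (Fin n)) : ℕ :=
  Finset.univ.sup fun i : Fin n => (((σ i : ℕ) : ℤ) - ((i : ℕ) : ℤ)).natAbs

/-- Normalized Spearman's uniform metric `ρ̃_∞ = (n − ρ_∞)/√n`. -/
noncomputable def rhoInfTilde {n : ℕ} (σ : Equiv.Perm (Fin n)) : ℝ :=
  ((n : ℝ) - (rhoInf σ : ℝ)) / Real.sqrt n

/-!
Put `m = ⌊α √n⌋` and let `L` be the set of the `m` smallest points. Whether `ρ̃_∞(σ) ≤ α` depends
only on the images and preimages of the points of `L` under `σ`. Conjugate `σ` by a uniformly random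
permutation `c` fixing `L` pointwise: class events are unchanged, while the images and preimages of
`L` are moved by `c`. If these `2m` points are distinct and outside `L`, then `c` sends them to a
uniformly random injective tuple outside `L`, so the probability over `c` of the event
`ρ̃_∞ ≤ α` is a constant independent of `σ`. Each conflicting point changes this probability by at
most `m / (n - m)`, and the expected number of conflicts is at most `4 m² / n`, so the covariance
with any class event is `O(m³ / n²) = O(n^(-1/2))`.
-/

section UniformProb

variable {Ω Ω' : Type*} [Fintype Ω] [Fintype Ω']

/-- The probability of the event `p` under the uniform measure on a finite type, encoded as the
proportion of points satisfying `p`. On `Equiv.Perm (Fin n)` it is definitionally `Pn`. -/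
noncomputable def uniformProb (p : Ω → Prop) : ℝ :=
  (#{ω | p ω} : ℝ) / Fintype.card Ω

lemma uniformProb_eq_expect (p : Ω → Prop) :
    uniformProb p = 𝔼 ω, if p ω then (1 : ℝ) else 0 := by
  rw [uniformProb, Fintype.expect_eq_sum_div_card, Finset.sum_boole]

lemma uniformProb_nonneg (p : Ω → Prop) : 0 ≤ uniformProb p := by
  unfold uniformProb
  positivity

lemma uniformProb_le_one (p : Ω → Prop) : uniformProb p ≤ 1 :=
  div_le_one_of_le₀ (mod_cast Finset.card_le_univ _) (Nat.cast_nonneg _)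

lemma uniformProb_mono {p q : Ω → Prop} (h : ∀ ω, p ω → q ω) :
    uniformProb p ≤ uniformProb q := by
  unfold uniformProb
  gcongr
  exact h _

lemma uniformProb_or_le (p q : Ω → Prop) :
    uniformProb (fun ω => p ω ∨ q ω) ≤ uniformProb p + uniformProb q := by
  simp only [uniformProb_eq_expect, ← Finset.expect_add_distrib]
  refine Finset.expect_le_expect fun ω _ => ?_
  by_cases hp : p ω <;> by_cases hq : q ω <;> simp [hp, hq]

lemma uniformProb_exists_mem_le {κ : Type*} (s : Finset κ) (p : κ → Ω → Prop) :
    uniformProb (fun ω => ∃ k ∈ s, p k ω) ≤ ∑ k ∈ s, uniformProb (p k) := by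
  simp only [uniformProb_eq_expect, ← Finset.expect_sum_comm]
  refine Finset.expect_le_expect fun ω _ => ?_
  split_ifs with h
  · obtain ⟨k, hk, hpk⟩ := h
    have hle := Finset.single_le_sum (f := fun k => if p k ω then (1 : ℝ) else 0)
      (fun _ _ => by positivity) hk
    simpa only [hpk, if_true] using hle
  · positivity

lemma uniformProb_not_and (p q : Ω → Prop) :
    uniformProb (fun ω => ¬ p ω ∧ q ω) = uniformProb q - uniformProb (fun ω => p ω ∧ q ω) := by
  simp only [uniformProb_eq_expect, ← Finset.expect_sub_distrib]
  refine Finset.expect_congr rfl fun ω _ => ?_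
  by_cases hp : p ω <;> by_cases hq : q ω <;> simp [hp, hq]

lemma uniformProb_not [Nonempty Ω] (p : Ω → Prop) :
    uniformProb (fun ω => ¬ p ω) = 1 - uniformProb p := by
  simpa [uniformProb] using uniformProb_not_and p fun _ => True

lemma uniformProb_comp_equiv (e : Ω ≃ Ω') (p : Ω' → Prop) :
    uniformProb (fun ω => p (e ω)) = uniformProb p := by
  simp only [uniformProb_eq_expect]
  exact Fintype.expect_equiv e _ _ fun _ => rfl

lemma sum_uniformProb_eq {X : Type*} (f : Ω → X) (T : Finset X) :
    ∑ x ∈ T, uniformProb (fun ω => f ω = x) = uniformProb fun ω => f ω ∈ T := by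
  simp only [uniformProb_eq_expect, ← Finset.expect_sum_comm]
  refine Finset.expect_congr rfl fun ω _ => ?_
  by_cases hω : f ω ∈ T <;> simp [hω]

lemma expect_card_filter {κ : Type*} [Fintype κ] (p : κ → Ω → Prop) :
    𝔼 ω, (#{k | p k ω} : ℝ) = ∑ k, uniformProb (p k) := by
  simp only [uniformProb_eq_expect, ← Finset.expect_sum_comm, Finset.sum_boole]

lemma abs_expect_ite_sub_expect_mul_uniformProb_le [Nonempty Ω] (A : Ω → Prop) (p : Ω → ℝ)
    (d : ℝ) :
    |(𝔼 ω, if A ω then p ω else 0) - (𝔼 ω, p ω) * uniformProb A| ≤ 𝔼 ω, |p ω - d| := by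
  have hcentered : (𝔼 ω, if A ω then p ω else 0) - (𝔼 ω, p ω) * uniformProb A =
      𝔼 ω, ((if A ω then 1 else 0) - uniformProb A) * (p ω - d) := by
    have hd : (𝔼 ω, if A ω then d else 0) = uniformProb A * d := by
      simp only [uniformProb_eq_expect, Finset.expect_mul, ite_mul, one_mul, zero_mul]
    simp only [sub_mul, mul_sub, Finset.expect_sub_distrib, ← Finset.mul_expect,
      Fintype.expect_const, ite_mul, one_mul, zero_mul, hd]
    ring
  rw [hcentered]
  refine (Finset.abs_expect_le _ _).trans (Finset.expect_le_expect fun ω _ => ?_)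
  rw [abs_mul]
  refine mul_le_of_le_one_left (abs_nonneg _) (abs_le.2 ?_)
  have := uniformProb_nonneg A
  have := uniformProb_le_one A
  split_ifs <;> constructor <;> linarith

end UniformProb

section FiniteGroup

variable {G : Type*} [Group G] [Fintype G]

lemma uniformProb_and_eq_expect_conj (H : Subgroup G) {A : G → Prop}
    (hA : ∀ a σ, A (a * σ * a⁻¹) ↔ A σ) (B : G → Prop) :
    uniformProb (fun σ => B σ ∧ A σ) =
      𝔼 σ, if A σ then uniformProb (fun c : H => B (c * σ * (c : G)⁻¹)) else 0 := by
  have hconj (c : H) : uniformProb (fun σ => B (c * σ * (c : G)⁻¹) ∧ A σ) =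
      uniformProb fun σ => B σ ∧ A σ := by
    simpa [hA] using uniformProb_comp_equiv (MulAut.conj (c : G)).toEquiv fun σ => B σ ∧ A σ
  calc uniformProb (fun σ => B σ ∧ A σ)
      = 𝔼 c : H, uniformProb fun σ => B (c * σ * (c : G)⁻¹) ∧ A σ := by
        simp only [hconj, Fintype.expect_const]
    _ = _ := by
        simp only [uniformProb_eq_expect]
        rw [Finset.expect_comm]
        refine Finset.expect_congr rfl fun σ _ => ?_
        by_cases hσ : A σ <;> simp [hσ]

-- Averaging over conjugation by `H` does not affect a class event, so only the fluctuation of the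
-- averaged probability of `B` around a constant contributes to the covariance.
lemma abs_uniformProb_and_sub_mul_le_expect_conj (H : Subgroup G) {A : G → Prop}
    (hA : ∀ a σ, A (a * σ * a⁻¹) ↔ A σ) (B : G → Prop) (d : ℝ) :
    |uniformProb (fun σ => B σ ∧ A σ) - uniformProb B * uniformProb A| ≤
      𝔼 σ, |uniformProb (fun c : H => B (c * σ * (c : G)⁻¹)) - d| := by
  have hB : uniformProb B = 𝔼 σ, uniformProb fun c : H => B (c * σ * (c : G)⁻¹) := by
    simpa using uniformProb_and_eq_expect_conj H (A := fun _ => True) (fun _ _ => Iff.rfl) B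
  rw [uniformProb_and_eq_expect_conj H hA, hB]
  exact abs_expect_ite_sub_expect_mul_uniformProb_le A _ d

lemma card_mul_uniformProb_smul_eq_le_one {X : Type*} [MulAction G X] (x y : X) {T : Finset X}
    (hT : ∀ z ∈ T, z ∈ MulAction.orbit G y) :
    #T * uniformProb (fun g : G => g • x = y) ≤ 1 := by
  have hfiber : ∀ z ∈ T, uniformProb (fun g : G => g • x = z) =
      uniformProb fun g : G => g • x = y := by
    intro z hz
    obtain ⟨a, rfl⟩ := hT z hz
    simpa [mul_smul] using
      (uniformProb_comp_equiv (Equiv.mulLeft a) fun g : G => g • x = a • y).symm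
  calc #T * uniformProb (fun g : G => g • x = y)
      = ∑ z ∈ T, uniformProb fun g : G => g • x = z := by
        rw [Finset.sum_congr rfl hfiber, Finset.sum_const, nsmul_eq_mul]
    _ ≤ 1 := by
        rw [sum_uniformProb_eq]
        exact uniformProb_le_one _

end FiniteGroup

section UniformPerm

variable {V : Type*} [Fintype V] [DecidableEq V]

lemma uniformProb_perm_apply_eq_le (x y : V) :
    uniformProb (fun σ : Equiv.Perm V => σ x = y) ≤ 1 / Fintype.card V := by
  have hV : (0 : ℝ) < Fintype.card V := mod_cast Fintype.card_pos_iff.2 ⟨x⟩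
  rw [le_div_iff₀' hV, ← Finset.card_univ]
  exact card_mul_uniformProb_smul_eq_le_one (G := Equiv.Perm V) x y
    fun z _ => MulAction.exists_smul_eq _ y z

lemma uniformProb_perm_apply_eq_and_le {x x' : V} (hx : x ≠ x') (y y' : V) :
    uniformProb (fun σ : Equiv.Perm V => σ x = y ∧ σ x' = y') ≤
      1 / (Fintype.card V * (Fintype.card V - 1) : ℝ) := by
  have hV : (1 : ℝ) < Fintype.card V :=
    mod_cast Fintype.one_lt_card_iff.2 ⟨x, x', hx⟩
  have hpos : (0 : ℝ) < Fintype.card V * (Fintype.card V - 1) := by nlinarith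
  have hoffDiag : (#(univ : Finset V).offDiag : ℝ) = Fintype.card V * (Fintype.card V - 1) := by
    rw [Finset.offDiag_card, Finset.card_univ, Nat.cast_sub (Nat.le_mul_self _)]
    push_cast
    ring
  rcases eq_or_ne y y' with rfl | hy
  · have hfalse (σ : Equiv.Perm V) : ¬ (σ x = y ∧ σ x' = y) :=
      fun h => hx (σ.injective (h.1.trans h.2.symm))
    simpa only [uniformProb, hfalse, Finset.filter_false, Finset.card_empty, Nat.cast_zero,
      zero_div] using (one_div_pos.2 hpos).le
  · rw [le_div_iff₀' hpos, ← hoffDiag]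
    have horbit : ∀ z ∈ (univ : Finset V).offDiag,
        z ∈ MulAction.orbit (Equiv.Perm V) (y, y') := by
      rintro ⟨z, z'⟩ hz
      obtain ⟨σ, h, h'⟩ := MulAction.is_two_pretransitive_iff.1
        (Equiv.Perm.isMultiplyPretransitive V 2) hy (Finset.mem_offDiag.1 hz).2.2
      exact ⟨σ, Prod.ext h h'⟩
    simpa [Prod.ext_iff] using
      card_mul_uniformProb_smul_eq_le_one (G := Equiv.Perm V) (x, x') (y, y') horbit

lemma uniformProb_perm_apply_apply_eq_le (x y : V) :
    uniformProb (fun σ : Equiv.Perm V => σ (σ x) = y) ≤ 2 / Fintype.card V := by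
  have hsplit (σ : Equiv.Perm V) (hσ : σ (σ x) = y) :
      σ x = x ∨ ∃ z ∈ univ.erase x, σ x = z ∧ σ z = y :=
    or_iff_not_imp_left.2 fun hne => ⟨σ x, by simpa using hne, rfl, hσ⟩
  have hpair : ∀ z ∈ univ.erase x, uniformProb (fun σ : Equiv.Perm V => σ x = z ∧ σ z = y) ≤
      1 / (Fintype.card V * (Fintype.card V - 1) : ℝ) :=
    fun z hz => uniformProb_perm_apply_eq_and_le (Finset.ne_of_mem_erase hz).symm _ _
  have hV : 0 < Fintype.card V := Fintype.card_pos_iff.2 ⟨x⟩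
  calc uniformProb (fun σ : Equiv.Perm V => σ (σ x) = y)
      ≤ uniformProb (fun σ : Equiv.Perm V => σ x = x) +
          ∑ z ∈ univ.erase x, uniformProb (fun σ : Equiv.Perm V => σ x = z ∧ σ z = y) :=
        (uniformProb_mono hsplit).trans <| (uniformProb_or_le _ _).trans <|
          add_le_add_right (uniformProb_exists_mem_le _ _) _
    _ ≤ 1 / Fintype.card V +
          (Fintype.card V - 1 : ℝ) * (1 / (Fintype.card V * (Fintype.card V - 1) : ℝ)) := by
        refine add_le_add (uniformProb_perm_apply_eq_le x x)
          ((Finset.sum_le_card_nsmul _ _ _ hpair).trans_eq ?_)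
        rw [Finset.card_erase_of_mem (mem_univ x), nsmul_eq_mul, Finset.card_univ,
          Nat.cast_sub hV, Nat.cast_one]
    _ ≤ 2 / Fintype.card V := by
        rcases eq_or_ne (Fintype.card V : ℝ) 1 with h | h
        · simp [h]
        · have : (Fintype.card V - 1 : ℝ) ≠ 0 := sub_ne_zero.2 h
          field_simp
          norm_num

lemma uniformProb_fixingSubgroup_smul_mem_le {L R : Finset V} (hR : Disjoint R L) (v : V) :
    uniformProb (fun c : fixingSubgroup (Equiv.Perm V) (L : Set V) => c • v ∈ R) ≤
      #R / (#Lᶜ : ℝ) := by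
  have hpoint : ∀ r ∈ R, uniformProb
      (fun c : fixingSubgroup (Equiv.Perm V) (L : Set V) => c • v = r) ≤ 1 / (#Lᶜ : ℝ) := by
    intro r hr
    have hrL : r ∉ L := Finset.disjoint_left.1 hR hr
    have hpos : (0 : ℝ) < #Lᶜ := mod_cast Finset.card_pos.2 ⟨r, Finset.mem_compl.2 hrL⟩
    rw [le_div_iff₀' hpos]
    refine card_mul_uniformProb_smul_eq_le_one v r fun z hz => ?_
    refine ⟨⟨Equiv.swap r z, (mem_fixingSubgroup_iff _).2 fun i hi => ?_⟩,
      Equiv.swap_apply_left r z⟩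
    exact Equiv.swap_apply_of_ne_of_ne (ne_of_mem_of_not_mem hi hrL)
      (ne_of_mem_of_not_mem hi (Finset.mem_compl.1 hz))
  rw [← sum_uniformProb_eq, div_eq_mul_one_div, ← nsmul_eq_mul]
  exact Finset.sum_le_card_nsmul _ _ _ hpoint

end UniformPerm

section Injections

variable {K V : Type*}

lemma exists_injective_eqOn [Fintype K] {T : Finset V} (hK : Fintype.card K ≤ #T) {w : K → V}
    {S : Finset K} (hinj : Set.InjOn w S) (hmaps : Set.MapsTo w S T) :
    ∃ w' : K → V, w'.Injective ∧ (∀ k, w' k ∈ T) ∧ Set.EqOn w' w S := by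
  have himage : S.image w ⊆ T := Finset.image_subset_iff.2 hmaps
  obtain ⟨T', hST', hT'T, hcard⟩ := Finset.exists_subsuperset_card_eq himage
    (Finset.card_image_le.trans (Finset.card_le_univ S)) hK
  obtain ⟨g, hg⟩ := Finset.exists_equiv_extend_of_card_eq hcard.symm hST' hinj
  exact ⟨fun k => g k, Subtype.val_injective.comp g.injective, fun k => hT'T (g k).2, hg⟩

lemma exists_mem_fixingSubgroup_smul_eq [Finite K] {L : Finset V} {w w' : K → V}
    (hw : w.Injective) (hw' : w'.Injective) (hwL : ∀ k, w k ∉ L) (hwL' : ∀ k, w' k ∉ L) :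
    ∃ c : fixingSubgroup (Equiv.Perm V) (L : Set V), ∀ k, c • w k = w' k := by
  obtain ⟨π, hπ⟩ := Equiv.Perm.exists_extending_pair (Sum.elim w ((↑) : L → V))
    (Sum.elim w' ((↑) : L → V))
    (hw.sumElim Subtype.val_injective fun k x h => hwL k (h ▸ x.2))
    (hw'.sumElim Subtype.val_injective fun k x h => hwL' k (h ▸ x.2))
  exact ⟨⟨π, (mem_fixingSubgroup_iff _).2 fun x hx => hπ (Sum.inr ⟨x, hx⟩)⟩,
    fun k => hπ (Sum.inl k)⟩

end Injections

section AvoidProb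

variable {V : Type*} [Fintype V] [DecidableEq V] {K : Type*} {L : Finset V} {R : K → Finset V}

/-- The probability that a uniformly random permutation fixing `L` pointwise moves no entry `w k`
of the tuple `w` into the corresponding set `R k`. -/
noncomputable def avoidProb (L : Finset V) (R : K → Finset V) (w : K → V) : ℝ :=
  uniformProb fun c : fixingSubgroup (Equiv.Perm V) (L : Set V) => ∀ k, c • w k ∉ R k

lemma avoidProb_eq_of_injective [Finite K] {w w' : K → V} (hw : w.Injective)
    (hw' : w'.Injective) (hwL : ∀ k, w k ∉ L) (hwL' : ∀ k, w' k ∉ L) :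
    avoidProb L R w = avoidProb L R w' := by
  obtain ⟨a, ha⟩ := exists_mem_fixingSubgroup_smul_eq hw hw' hwL hwL'
  have hshift := uniformProb_comp_equiv (Equiv.mulRight a) fun c => ∀ k, c • w k ∉ R k
  simpa only [avoidProb, Equiv.coe_mulRight, mul_smul, ha] using hshift.symm

variable {m : ℕ}

lemma avoidProb_le_add_card_ne [Fintype K] (hR : ∀ k, Disjoint (R k) L)
    (hRm : ∀ k, #(R k) ≤ m) (w w' : K → V) :
    avoidProb L R w ≤ avoidProb L R w' + #{k | w k ≠ w' k} * (m / (#Lᶜ : ℝ)) := by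
  have hchange (c : fixingSubgroup (Equiv.Perm V) (L : Set V)) (hc : ∀ k, c • w k ∉ R k) :
      (∀ k, c • w' k ∉ R k) ∨ ∃ k ∈ ({k | w k ≠ w' k} : Finset K), c • w' k ∈ R k := by
    refine or_iff_not_imp_left.2 fun h => ?_
    push Not at h
    obtain ⟨k, hk⟩ := h
    exact ⟨k, by simpa using fun h : w k = w' k => hc k (h ▸ hk), hk⟩
  have hhit : ∀ k ∈ ({k | w k ≠ w' k} : Finset K), uniformProb
      (fun c : fixingSubgroup (Equiv.Perm V) (L : Set V) => c • w' k ∈ R k) ≤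
        m / (#Lᶜ : ℝ) := by
    intro k _
    refine (uniformProb_fixingSubgroup_smul_mem_le (hR k) _).trans ?_
    gcongr
    exact hRm k
  refine (uniformProb_mono hchange).trans ((uniformProb_or_le _ _).trans ?_)
  refine add_le_add_right ((uniformProb_exists_mem_le _ _).trans ?_) _
  rw [← nsmul_eq_mul]
  exact Finset.sum_le_card_nsmul _ _ _ hhit

lemma abs_avoidProb_sub_le [Finite K] (hR : ∀ k, Disjoint (R k) L) (hRm : ∀ k, #(R k) ≤ m)
    {w₀ w : K → V} (hw₀ : w₀.Injective) (hw₀L : ∀ k, w₀ k ∉ L) {S : Finset K}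
    (hinj : Set.InjOn w (S : Set K)ᶜ) (hSL : ∀ k ∉ S, w k ∉ L) :
    |avoidProb L R w - avoidProb L R w₀| ≤ #S * (m / (#Lᶜ : ℝ)) := by
  have := Fintype.ofFinite K
  have hK : Fintype.card K ≤ #Lᶜ :=
    Finset.card_le_card_of_injOn w₀ (fun k _ => by simpa using hw₀L k) hw₀.injOn
  rw [← Finset.coe_compl] at hinj
  obtain ⟨w', hw', hw'L, hw'S⟩ := exists_injective_eqOn hK hinj
    fun k hk => by simpa using hSL k (by simpa using hk)
  have hne (u u' : K → V) (h : Set.EqOn u u' (Sᶜ : Finset K)) :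
      avoidProb L R u - avoidProb L R u' ≤ #S * (m / (#Lᶜ : ℝ)) := by
    have hsub : ({k | u k ≠ u' k} : Finset K) ⊆ S := fun k hk =>
      by_contra fun hkS => (Finset.mem_filter.1 hk).2 (h (by simpa using hkS))
    rw [sub_le_iff_le_add']
    refine (avoidProb_le_add_card_ne hR hRm u u').trans ?_
    gcongr
  rw [avoidProb_eq_of_injective hw₀ hw' hw₀L fun k => Finset.mem_compl.1 (hw'L k)]
  exact abs_sub_le_iff.2 ⟨hne w w' hw'S.symm, hne w' w hw'S⟩

end AvoidProb

section Neighbors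

variable {V : Type*} {L : Finset V}

/-- The images (left summand) and preimages (right summand) under `σ` of the points of `L`. -/
def neighbors (L : Finset V) (σ : Equiv.Perm V) : L ⊕ L → V :=
  Sum.elim (fun x => σ x) (fun x => σ.symm x)

/-- The event that every image and preimage of a point of `L` lies outside its forbidden set. -/
def AvoidsNeighbors (L : Finset V) (R : L ⊕ L → Finset V) (σ : Equiv.Perm V) : Prop :=
  ∀ k, neighbors L σ k ∉ R k

/-- The indices at which `neighbors L σ` may fail to be injective with values outside `L`. An image
`σ x` coincides with a preimage `σ.symm y` exactly when `σ.symm (σ.symm y) = x`; such a coincidence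
is charged to the preimage. -/
noncomputable def conflicts (L : Finset V) (σ : Equiv.Perm V) : Finset (L ⊕ L) :=
  {k | Sum.elim (fun x : L => σ x ∈ L) (fun x : L => σ.symm x ∈ L ∨ σ.symm (σ.symm x) ∈ L) k}

lemma neighbors_conj (c : fixingSubgroup (Equiv.Perm V) (L : Set V)) (σ : Equiv.Perm V)
    (k : L ⊕ L) : neighbors L (c * σ * (c : Equiv.Perm V)⁻¹) k = c • neighbors L σ k := by
  have hc (x : L) : (c : Equiv.Perm V) x = x := (mem_fixingSubgroup_iff _).1 c.2 x x.2
  have hc' (x : L) : (c : Equiv.Perm V).symm x = x := (Equiv.symm_apply_eq _).2 (hc x).symm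
  rcases k with x | x <;> simp [neighbors, hc, hc', Subgroup.smul_def, Equiv.symm_apply_eq]

lemma neighbors_notMem_of_notMem_conflicts {σ : Equiv.Perm V} {k : L ⊕ L}
    (hk : k ∉ conflicts L σ) : neighbors L σ k ∉ L := by
  rcases k with x | x <;> simp_all [neighbors, conflicts]

lemma injOn_neighbors_compl_conflicts (σ : Equiv.Perm V) :
    Set.InjOn (neighbors L σ) (conflicts L σ : Set (L ⊕ L))ᶜ := by
  have himage_ne (x y : L) (hy : Sum.inr y ∉ conflicts L σ) : σ x ≠ σ.symm y := by
    intro hxy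
    have hback : σ.symm (σ.symm y) = x := by rw [← hxy, Equiv.symm_apply_apply]
    simp [conflicts, hback] at hy
  rintro (x | x) hx (y | y) hy hxy <;>
    simp only [Set.mem_compl_iff, Finset.mem_coe] at hx hy
  · exact congrArg Sum.inl (Subtype.ext (σ.injective hxy))
  · exact absurd hxy (himage_ne x y hy)
  · exact absurd hxy.symm (himage_ne y x hx)
  · exact congrArg Sum.inr (Subtype.ext (σ.symm.injective hxy))

variable [Fintype V] [DecidableEq V]

lemma expect_card_conflicts_le (L : Finset V) :
    𝔼 σ : Equiv.Perm V, (#(conflicts L σ) : ℝ) ≤ 4 * (#L : ℝ) ^ 2 / Fintype.card V := by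
  have hmem {F : Equiv.Perm V → V} {b : ℝ}
      (hF : ∀ y, uniformProb (fun σ => F σ = y) ≤ b) :
      uniformProb (fun σ => F σ ∈ L) ≤ #L * b := by
    rw [← sum_uniformProb_eq, ← nsmul_eq_mul]
    exact Finset.sum_le_card_nsmul _ _ _ fun y _ => hF y
  have himage (x : V) : uniformProb (fun σ : Equiv.Perm V => σ x ∈ L) ≤
      #L * (1 / Fintype.card V) :=
    hmem fun y => uniformProb_perm_apply_eq_le x y
  have hpreimage (x : V) : uniformProb (fun σ : Equiv.Perm V => σ.symm x ∈ L) ≤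
      #L * (1 / Fintype.card V) :=
    hmem fun y => by
      simpa only [Equiv.symm_apply_eq, @eq_comm _ x] using uniformProb_perm_apply_eq_le y x
  have hpreimage₂ (x : V) : uniformProb (fun σ : Equiv.Perm V => σ.symm (σ.symm x) ∈ L) ≤
      #L * (2 / Fintype.card V) :=
    hmem fun y => by
      simpa only [Equiv.symm_apply_eq, @eq_comm _ x] using uniformProb_perm_apply_apply_eq_le y x
  simp only [conflicts, expect_card_filter, Fintype.sum_sum_type, Sum.elim_inl, Sum.elim_inr]
  calc _ ≤ ∑ _x : L, (#L : ℝ) * (1 / Fintype.card V) +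
        ∑ _x : L, ((#L : ℝ) * (1 / Fintype.card V) + #L * (2 / Fintype.card V)) := by
        gcongr with x _ x _
        · exact himage x
        · exact (uniformProb_or_le _ _).trans (add_le_add (hpreimage x) (hpreimage₂ x))
    _ = 4 * (#L : ℝ) ^ 2 / Fintype.card V := by
        simp only [Finset.sum_const, Finset.card_univ, Fintype.card_coe, nsmul_eq_mul]
        ring

theorem abs_uniformProb_avoidsNeighbors_and_sub_mul_le (hL : 3 * #L ≤ Fintype.card V)
    {R : L ⊕ L → Finset V} {m : ℕ} (hR : ∀ k, Disjoint (R k) L) (hRm : ∀ k, #(R k) ≤ m)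
    {A : Equiv.Perm V → Prop} (hA : ∀ a σ, A (a * σ * a⁻¹) ↔ A σ) :
    |uniformProb (fun σ : Equiv.Perm V => AvoidsNeighbors L R σ ∧ A σ) -
      uniformProb (AvoidsNeighbors L R) * uniformProb A| ≤
        4 * (#L : ℝ) ^ 2 / Fintype.card V * (m / (#Lᶜ : ℝ)) := by
  obtain ⟨w₀⟩ : Nonempty (L ⊕ L ↪ (Lᶜ : Finset V)) := by
    refine Function.Embedding.nonempty_of_card_le ?_
    rw [Fintype.card_sum, Fintype.card_coe, Fintype.card_coe, Finset.card_compl]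
    omega
  have hconj (σ : Equiv.Perm V) : uniformProb
      (fun c : fixingSubgroup (Equiv.Perm V) (L : Set V) =>
        AvoidsNeighbors L R (c * σ * (c : Equiv.Perm V)⁻¹)) = avoidProb L R (neighbors L σ) := by
    simp only [AvoidsNeighbors, neighbors_conj, avoidProb]
  refine (abs_uniformProb_and_sub_mul_le_expect_conj
    (fixingSubgroup (Equiv.Perm V) (L : Set V)) hA _ (avoidProb L R fun k => w₀ k)).trans ?_
  calc _ ≤ 𝔼 σ : Equiv.Perm V, (#(conflicts L σ) : ℝ) * (m / (#Lᶜ : ℝ)) := by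
        refine Finset.expect_le_expect fun σ _ => ?_
        rw [hconj]
        exact abs_avoidProb_sub_le hR hRm (Subtype.val_injective.comp w₀.injective)
          (fun k => Finset.mem_compl.1 (w₀ k).2) (injOn_neighbors_compl_conflicts σ)
          fun k hk => neighbors_notMem_of_notMem_conflicts hk
    _ ≤ _ := by
        rw [← Finset.expect_mul]
        gcongr
        exact expect_card_conflicts_le L

end Neighbors

section Spearman

variable {n : ℕ}

/-- The `m` smallest elements of `Fin n` (all of them if `n ≤ m`). -/
def initialSegment (n m : ℕ) : Finset (Fin n) := {i | (i : ℕ) < m}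

/-- The elements exceeding `i` by at least `n - m`, written without truncated subtraction. -/
def farAbove (m : ℕ) (i : Fin n) : Finset (Fin n) := {j | (i : ℕ) + n ≤ j + m}

lemma card_initialSegment {m : ℕ} (hm : m ≤ n) : #(initialSegment n m) = m := by
  rw [initialSegment, Fin.card_filter_val_lt, min_eq_right hm]

lemma card_farAbove_le (m : ℕ) (i : Fin n) : #(farAbove m i) ≤ m := by
  have hrev : Set.MapsTo Fin.rev (farAbove m i : Set (Fin n)) (initialSegment n m) := by
    intro j hj
    simp only [farAbove, initialSegment, Finset.coe_filter, Finset.mem_univ, true_and,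
      Set.mem_ofPred_eq, Fin.val_rev] at hj ⊢
    omega
  calc #(farAbove m i) ≤ #(initialSegment n m) :=
        Finset.card_le_card_of_injOn Fin.rev hrev Fin.rev_injective.injOn
    _ ≤ m := by
        rw [initialSegment, Fin.card_filter_val_lt]
        exact min_le_right _ _

lemma disjoint_farAbove_initialSegment {m : ℕ} (hm : 2 * m ≤ n) (i : Fin n) :
    Disjoint (farAbove m i) (initialSegment n m) := by
  rw [Finset.disjoint_left]
  intro j hj hj'
  simp only [farAbove, initialSegment, Finset.mem_filter, Finset.mem_univ, true_and] at hj hj'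
  omega

lemma rhoInf_le (σ : Equiv.Perm (Fin n)) : rhoInf σ ≤ n :=
  Finset.sup_le fun i _ => by omega

lemma rhoInf_add_lt_iff_avoidsNeighbors {m : ℕ} (hm : m < n) (σ : Equiv.Perm (Fin n)) :
    rhoInf σ + m < n ↔ AvoidsNeighbors (initialSegment n m)
      (Sum.elim (fun i => farAbove m i) (fun i => farAbove m i)) σ := by
  have hsup : rhoInf σ + m < n ↔
      ∀ i, (((σ i : ℕ) : ℤ) - ((i : ℕ) : ℤ)).natAbs + m < n := by
    rw [← Nat.lt_sub_iff_add_lt, rhoInf, Finset.sup_lt_iff (by simpa using hm)]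
    simp only [Finset.mem_univ, true_implies, Nat.lt_sub_iff_add_lt]
  rw [hsup]
  simp only [AvoidsNeighbors, neighbors, Sum.forall, Sum.elim_inl, Sum.elim_inr, Subtype.forall,
    initialSegment, farAbove, Finset.mem_filter, Finset.mem_univ, true_and, not_le]
  constructor
  · refine fun h => ⟨fun i _ => ?_, fun i _ => ?_⟩
    · have := h i
      omega
    · have := h (σ.symm i)
      rw [Equiv.apply_symm_apply] at this
      omega
  · rintro ⟨himage, hpreimage⟩ i
    by_contra hfar
    rcases le_total (i : ℕ) (σ i) with hle | hle
    · have := himage i (by omega)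
      omega
    · have := hpreimage (σ i) (by omega)
      rw [Equiv.symm_apply_apply] at this
      omega

lemma rhoInfTilde_nonneg (σ : Equiv.Perm (Fin n)) : 0 ≤ rhoInfTilde σ :=
  div_nonneg (sub_nonneg.2 (mod_cast rhoInf_le σ)) (Real.sqrt_nonneg _)

lemma rhoInfTilde_le_iff (hn : 0 < n) {α : ℝ} (hα : 0 ≤ α) (σ : Equiv.Perm (Fin n)) :
    rhoInfTilde σ ≤ α ↔ ¬ rhoInf σ + ⌊α * √n⌋₊ < n := by
  have hsqrt : 0 < √(n : ℝ) := Real.sqrt_pos.2 (mod_cast hn)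
  rw [rhoInfTilde, div_le_iff₀ hsqrt, ← Nat.cast_sub (rhoInf_le σ),
    ← Nat.le_floor_iff (by positivity), not_lt, Nat.sub_le_iff_le_add']

lemma abs_Pn_rhoInf_add_lt_and_sub_mul_le {m : ℕ} (hn : 0 < n) (hm : 3 * m ≤ n)
    {A : Equiv.Perm (Fin n) → Prop} (hA : ∀ a σ, A (a * σ * a⁻¹) ↔ A σ) :
    |Pn (fun σ : Equiv.Perm (Fin n) => rhoInf σ + m < n ∧ A σ) -
      Pn (fun σ : Equiv.Perm (Fin n) => rhoInf σ + m < n) * Pn A| ≤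
        6 * (m : ℝ) ^ 3 / (n : ℝ) ^ 2 := by
  have hcard : #(initialSegment n m) = m := card_initialSegment (by omega)
  have hcov := abs_uniformProb_avoidsNeighbors_and_sub_mul_le (L := initialSegment n m)
    (R := Sum.elim (fun i => farAbove m i) (fun i => farAbove m i)) (m := m)
    (by rwa [hcard, Fintype.card_fin])
    (by rintro (i | i) <;> exact disjoint_farAbove_initialSegment (by omega) _)
    (by rintro (i | i) <;> exact card_farAbove_le m _) hA
  have hevent : AvoidsNeighbors (initialSegment n m)
      (Sum.elim (fun i => farAbove m i) (fun i => farAbove m i)) =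
        fun σ => rhoInf σ + m < n :=
    funext fun σ => propext (rhoInf_add_lt_iff_avoidsNeighbors (by omega) σ).symm
  rw [hevent, Finset.card_compl, hcard, Fintype.card_fin, Nat.cast_sub (by omega)] at hcov
  have : (0 : ℝ) < n := mod_cast hn
  have hm' : 3 * (m : ℝ) ≤ n := mod_cast hm
  calc _ ≤ 4 * (m : ℝ) ^ 2 / n * (m / (n - m)) := hcov
    _ ≤ 4 * (m : ℝ) ^ 2 / n * (m / (2 / 3 * n)) := by
        gcongr
        linarith
    _ = 6 * (m : ℝ) ^ 3 / (n : ℝ) ^ 2 := by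
        field_simp
        ring

lemma abs_Pn_rhoInfTilde_le_and_sub_mul_le (hn : 0 < n) {α : ℝ} (hα : 0 ≤ α) (hαn : 3 * α ≤ √n)
    {A : Equiv.Perm (Fin n) → Prop} (hA : ∀ a σ, A (a * σ * a⁻¹) ↔ A σ) :
    |Pn (fun σ : Equiv.Perm (Fin n) => rhoInfTilde σ ≤ α ∧ A σ) -
      Pn (fun σ : Equiv.Perm (Fin n) => rhoInfTilde σ ≤ α) * Pn A| ≤ 6 * α ^ 3 / √n := by
  have : 0 < √(n : ℝ) := Real.sqrt_pos.2 (mod_cast hn)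
  have hsq : √(n : ℝ) ^ 2 = n := Real.sq_sqrt n.cast_nonneg
  have hfloor : (⌊α * √n⌋₊ : ℝ) ≤ α * √n := Nat.floor_le (by positivity)
  have hm : 3 * ⌊α * √n⌋₊ ≤ n := by
    have : 3 * (⌊α * √n⌋₊ : ℝ) ≤ n := by nlinarith
    exact_mod_cast this
  have hcompl (p : Equiv.Perm (Fin n) → Prop) :
      Pn (fun σ => ¬ p σ ∧ A σ) - Pn (fun σ => ¬ p σ) * Pn A =
        -(Pn (fun σ => p σ ∧ A σ) - Pn p * Pn A) := by
    have hand : Pn (fun σ => ¬ p σ ∧ A σ) = Pn A - Pn fun σ => p σ ∧ A σ := uniformProb_not_and p A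
    have hnot : Pn (fun σ => ¬ p σ) = 1 - Pn p := uniformProb_not p
    rw [hand, hnot]
    ring
  simp only [rhoInfTilde_le_iff hn hα]
  rw [hcompl, abs_neg]
  calc _ ≤ 6 * (⌊α * √n⌋₊ : ℝ) ^ 3 / (n : ℝ) ^ 2 := abs_Pn_rhoInf_add_lt_and_sub_mul_le hn hm hA
    _ ≤ 6 * (α * √n) ^ 3 / (√n ^ 2) ^ 2 := by
        rw [hsq]
        gcongr
    _ = 6 * α ^ 3 / √n := by field_simp

end Spearman

theorem rhoInfTilde_asymp_indep_classFun_general (A : ∀ n : ℕ, Equiv.Perm (Fin n) → Prop)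
    (hA : ∀ n a σ, A n (a * σ * a⁻¹) ↔ A n σ) (α : ℝ) :
    Tendsto (fun n : ℕ =>
        Pn (fun σ : Equiv.Perm (Fin n) => rhoInfTilde σ ≤ α ∧ A n σ) -
          Pn (fun σ : Equiv.Perm (Fin n) => rhoInfTilde σ ≤ α) * Pn (A n))
      atTop (nhds 0) := by
  rcases lt_or_ge α 0 with hα | hα
  · have hempty {n : ℕ} (σ : Equiv.Perm (Fin n)) : ¬ rhoInfTilde σ ≤ α :=
      (hα.trans_le (rhoInfTilde_nonneg σ)).not_ge
    simp [Pn, hempty]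
  · have hsqrt : Tendsto (fun n : ℕ => √(n : ℝ)) atTop atTop :=
      Real.tendsto_sqrt_atTop.comp tendsto_natCast_atTop_atTop
    refine squeeze_zero_norm' ?_ (hsqrt.const_div_atTop (6 * α ^ 3))
    filter_upwards [eventually_gt_atTop 0, hsqrt.eventually_ge_atTop (3 * α)] with n hn hαn
    exact abs_Pn_rhoInfTilde_le_and_sub_mul_le hn hα hαn (hA n)

/-- Spearman's uniform metric is asymptotically independent of any weakly convergent
sequence of class functions: for every `α` and every continuity point `β` of the
distribution function of the limit law `μ`,
`P_n[ρ̃_∞ ≤ α, f_n < β] − P_n[ρ̃_∞ ≤ α]·P_n[f_n < β] → 0`. -/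
theorem rhoInfTilde_asymp_indep_classFun
    (f : ∀ n : ℕ, Equiv.Perm (Fin n) → ℝ)
    (hclass : ∀ n : ℕ, ∀ a σ : Equiv.Perm (Fin n), f n (a * σ * a⁻¹) = f n σ)
    (μ : MeasureTheory.Measure ℝ) (hμ : MeasureTheory.IsProbabilityMeasure μ)
    (hweak : ∀ g : ℝ → ℝ, Continuous g → (∃ C : ℝ, ∀ x, |g x| ≤ C) →
      Tendsto (fun n : ℕ => En (fun σ => g (f n σ))) atTop (nhds (∫ x, g x ∂μ)))
    (α β : ℝ) (hβ : ContinuousAt (fun x : ℝ => (μ (Set.Iic x)).toReal) β) :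
    Tendsto (fun n : ℕ =>
        Pn (fun σ : Equiv.Perm (Fin n) => rhoInfTilde σ ≤ α ∧ f n σ < β) -
          Pn (fun σ : Equiv.Perm (Fin n) => rhoInfTilde σ ≤ α) *
            Pn (fun σ : Equiv.Perm (Fin n) => f n σ < β))
      atTop (nhds 0) :=
  rhoInfTilde_asymp_indep_classFun_general (fun n σ => f n σ < β) (fun n a σ => by rw [hclass]) α
end

section
/- For σ ∈ S_n, let i*(σ) be the smallest index i ∈ {1,...,n} maximizing |σ(i) − i|. Then, under the uniform measure on S_n, the probability that the cycle of σ containing i*(σ) has length at least (log n)^4 tends to 1 as n → ∞. -/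
open scoped BigOperators Classical
open Finset Filter

/-- The displacement `|σ(i) − i|` of the index `i` under `σ`. -/
def disp {n : ℕ} (σ : Equiv.Perm (Fin n)) (i : Fin n) : ℕ :=
  (((σ i : ℕ) : ℤ) - ((i : ℕ) : ℤ)).natAbs

/-- The length of the cycle of `σ` containing `i`: the cardinality of the orbit of `i`
under iteration of `σ`. -/
noncomputable def cycleLenAt {n : ℕ} (σ : Equiv.Perm (Fin n)) (i : Fin n) : ℕ :=
  (Finset.univ.filter fun j : Fin n => σ.SameCycle i j).card

/-- `i` is the smallest index maximizing `|σ(i) − i|`, i.e. `i = i*(σ)`. -/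
def isArgmaxDisp {n : ℕ} (σ : Equiv.Perm (Fin n)) (i : Fin n) : Prop :=
  (∀ j : Fin n, disp σ j ≤ disp σ i) ∧ ∀ j : Fin n, disp σ j = disp σ i → i ≤ j

/-! If `σ` maps one of the `k` smallest indices to one of the `k` largest, then its maximal
displacement exceeds `n - 2k`; a swapping argument shows that this fails with probability at most
`n / k²`. The pairs `(i, j)` with `|i - j| > n - 2k` lie in two corners of the square, so there are
`O(k²)` of them. For each such pair, `σ i = j` has probability `1 / n`, and given this the cycle of
`i` is shorter than `L` with probability `O(L / n)`: a short cycle leaves almost `n` choices of an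
outside point `y` whose cycle can be spliced into it, and the splicing is undone by remembering only
the old length. The union bound gives `O(n / k² + k² L / n²)`, which is `O(√(L / n))` for the best
`k`. Hence every cycle length that is `o(n)` is exceeded with probability tending to `1`. -/

open Equiv Asymptotics
open scoped Nat Topology

section Counting

variable {α : Type*} [DecidableEq α]

theorem swap_mul_apply_mem_iff {A B : Finset α} {σ : Perm α} (hσ : ∀ a ∈ A, σ a ∉ B)
    {a b c : α} (hb : b ∈ B) (hc : c ∈ A) : (swap (σ a) b * σ) c ∈ B ↔ c = a := by
  constructor
  · contrapose
    intro hca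
    have hσc : σ c ≠ b := fun h => hσ c hc (h ▸ hb)
    rw [Perm.mul_apply, swap_apply_of_ne_of_ne (σ.injective.ne hca) hσc]
    exact hσ c hc
  · rintro rfl
    simpa using hb

theorem swap_mul_iterate_eq_iterate {σ : Perm α} {i y : α} (hy : ¬ σ.SameCycle i y) {t : ℕ}
    (ht : t < Function.minimalPeriod σ i) : (swap i y * σ)^[t] i = σ^[t] i := by
  induction t with
  | zero => rfl
  | succ t ih =>
    have hi : σ^[t + 1] i ≠ i :=
      Function.not_isPeriodicPt_of_pos_of_lt_minimalPeriod t.succ_ne_zero ht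
    have hne : σ^[t + 1] i ≠ y := fun h => hy ⟨(t + 1 : ℕ), by
      rwa [zpow_natCast, ← Perm.iterate_eq_pow]⟩
    rw [Function.iterate_succ_apply', ih (Nat.lt_of_succ_lt ht), Perm.mul_apply,
      ← Function.iterate_succ_apply' σ, swap_apply_of_ne_of_ne hi hne]

theorem swap_mul_iterate_minimalPeriod {σ : Perm α} {i y : α}
    (hi : i ∈ Function.periodicPts σ) (hy : ¬ σ.SameCycle i y) :
    (swap i y * σ)^[Function.minimalPeriod σ i] i = y := by
  obtain ⟨t, ht⟩ := Nat.exists_eq_add_one.2 (Function.minimalPeriod_pos_of_mem_periodicPts hi)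
  have hperiod : σ^[t + 1] i = i := ht ▸ Function.iterate_minimalPeriod
  rw [ht, Function.iterate_succ_apply', swap_mul_iterate_eq_iterate hy (by omega), Perm.mul_apply,
    ← Function.iterate_succ_apply' σ, hperiod, swap_apply_left]

-- Multiplying by `swap i y` splices the cycle of `y` into the cycle of `i`, so that `y` becomes the
-- iterate of `i` whose index is the old cycle length.
theorem eq_and_eq_of_swap_mul_eq_of_minimalPeriod_eq {σ τ : Perm α} {i y z : α}
    (hσ : i ∈ Function.periodicPts σ) (hτ : i ∈ Function.periodicPts τ)
    (hy : ¬ σ.SameCycle i y) (hz : ¬ τ.SameCycle i z) (hswap : swap i y * σ = swap i z * τ)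
    (hperiod : Function.minimalPeriod σ i = Function.minimalPeriod τ i) : σ = τ ∧ y = z := by
  obtain rfl : y = z := by
    rw [← swap_mul_iterate_minimalPeriod hσ hy, hswap, hperiod,
      swap_mul_iterate_minimalPeriod hτ hz]
  exact ⟨mul_left_cancel hswap, rfl⟩

variable [Fintype α]

theorem card_perm_apply_eq_mul_card (i j : α) :
    #{σ : Perm α | σ i = j} * Fintype.card α = (Fintype.card α)! := by
  have card_fiber (y : α) : #{σ : Perm α | σ i = y} = #{σ : Perm α | σ i = j} :=
    card_equiv (Equiv.mulLeft (swap j y)) fun σ => by simp [swap_apply_eq_iff]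
  calc #{σ : Perm α | σ i = j} * Fintype.card α
      = ∑ y, #{σ : Perm α | σ i = y} := by simp [card_fiber, mul_comm]
    _ = Fintype.card (Perm α) :=
        (card_eq_sum_card_fiberwise fun σ _ => mem_coe.2 (mem_univ (σ i))).symm
    _ = (Fintype.card α)! := Fintype.card_perm

theorem card_perm_avoiding_mul_le (A B : Finset α) :
    #{σ : Perm α | ∀ a ∈ A, σ a ∉ B} * (#A * #B) ≤ (Fintype.card α)! * Fintype.card α := by
  rw [← card_product, ← card_product, ← Fintype.card_perm, ← Fintype.card_prod]
  refine card_le_card_of_injOn (t := univ)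
    (fun p => (swap (p.1 p.2.1) p.2.2 * p.1, p.1 p.2.1)) (fun _ _ => mem_coe.2 (mem_univ _)) ?_
  rintro ⟨σ, a, b⟩ hσab ⟨τ, c, d⟩ hτcd heq
  simp only [mem_coe, mem_product, mem_filter_univ] at hσab hτcd
  obtain ⟨hσ, ha, hb⟩ := hσab
  obtain ⟨hτ, -, hd⟩ := hτcd
  obtain ⟨hswap, himage⟩ := Prod.mk.inj heq
  dsimp only at hswap himage
  -- `a` is recovered as the only element of `A` that the new permutation maps into `B`.
  obtain rfl : a = c :=
    (swap_mul_apply_mem_iff hτ hd ha).1 (hswap ▸ (swap_mul_apply_mem_iff hσ hb ha).2 rfl)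
  obtain rfl : b = d := by simpa using DFunLike.congr_fun hswap a
  rw [himage] at hswap
  rw [mul_left_cancel hswap]

theorem card_filter_sameCycle (σ : Perm α) (i : α) :
    #{j | σ.SameCycle i j} = Function.minimalPeriod σ i := by
  have hσ : Function.minimalPeriod σ i = _ := MulAction.minimalPeriod_eq_card (a := σ) (b := i)
  rw [hσ, ← Fintype.card_subtype]
  refine Fintype.card_congr (Equiv.subtypeEquivRight fun j => ?_)
  simp [MulAction.mem_orbit_iff, Perm.SameCycle, Subgroup.smul_def]

theorem card_perm_apply_eq_and_minimalPeriod_lt_mul_le {i j : α} (hij : i ≠ j) (L : ℕ) :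
    #{σ : Perm α | σ i = j ∧ Function.minimalPeriod σ i < L} * (Fintype.card α - L) ≤
      #{σ : Perm α | σ i = j} * L := by
  set sending : Finset (Perm α) := {σ | σ i = j} with hsending
  set short : Finset (Perm α) := {σ | σ i = j ∧ Function.minimalPeriod σ i < L} with hshort
  set outside : Perm α → Finset α := fun σ => {y | ¬ σ.SameCycle i y} with houtside
  have card_outside : ∀ σ ∈ short, Fintype.card α - L ≤ #(outside σ) := by
    intro σ hσ
    have hlt : Function.minimalPeriod σ i < L := ((mem_filter_univ σ).1 hσ).2
    have hcompl : outside σ = ({y | σ.SameCycle i y} : Finset α)ᶜ := by simp [houtside]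
    rw [hcompl, card_compl, card_filter_sameCycle]
    exact Nat.sub_le_sub_left hlt.le _
  calc #short * (Fintype.card α - L)
      ≤ #(short.sigma outside) := by
        rw [card_sigma, ← smul_eq_mul]
        exact card_nsmul_le_sum _ _ _ card_outside
    _ ≤ #(sending ×ˢ range L) := by
        refine card_le_card_of_injOn
          (fun p => (swap i p.2 * p.1, Function.minimalPeriod p.1 i)) ?_ ?_
        · rintro ⟨σ, y⟩ hσy
          simp only [hsending, hshort, houtside, mem_coe, mem_sigma, mem_filter_univ, mem_product,
            mem_range] at hσy ⊢
          obtain ⟨⟨hσij, hperiod⟩, hy⟩ := hσy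
          have hjy : j ≠ y := fun h => hy ⟨1, by simpa [h] using hσij⟩
          exact ⟨by rw [Perm.mul_apply, hσij, swap_apply_of_ne_of_ne hij.symm hjy], hperiod⟩
        · rintro ⟨σ, y⟩ hσy ⟨τ, z⟩ hτz heq
          have hy : ¬ σ.SameCycle i y := (mem_filter_univ y).1 (mem_sigma.1 hσy).2
          have hz : ¬ τ.SameCycle i z := (mem_filter_univ z).1 (mem_sigma.1 hτz).2
          obtain ⟨hswap, hperiod⟩ := Prod.mk.inj heq
          obtain ⟨rfl, rfl⟩ := eq_and_eq_of_swap_mul_eq_of_minimalPeriod_eq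
            (σ.injective.mem_periodicPts i) (τ.injective.mem_periodicPts i) hy hz hswap hperiod
          rfl
    _ = #sending * L := by rw [card_product, card_range]

end Counting

section UniformProbability

variable {n : ℕ}

theorem Pn_eq_card_div_factorial (p : Perm (Fin n) → Prop) [DecidablePred p] :
    Pn p = #{σ | p σ} / n ! := by
  rw [Pn, Fintype.card_perm, Fintype.card_fin]
  congr!

theorem Pn_mul_factorial (p : Perm (Fin n) → Prop) [DecidablePred p] :
    Pn p * n ! = #{σ | p σ} := by
  rw [Pn_eq_card_div_factorial, div_mul_cancel₀ _ (by positivity)]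

theorem Pn_le_one (p : Perm (Fin n) → Prop) : Pn p ≤ 1 :=
  div_le_one_of_le₀ (mod_cast card_le_univ _) (by positivity)

theorem Pn_mono {p q : Perm (Fin n) → Prop} (h : ∀ σ, p σ → q σ) : Pn p ≤ Pn q := by
  rw [Pn, Pn]
  gcongr with σ
  exact h σ

theorem Pn_not (p : Perm (Fin n) → Prop) : Pn (fun σ => ¬ p σ) = 1 - Pn p := by
  have hadd := card_filter_add_card_filter_not (s := (univ : Finset (Perm (Fin n)))) p
  rw [card_univ, Fintype.card_perm, Fintype.card_fin] at hadd
  rw [eq_sub_iff_add_eq', Pn_eq_card_div_factorial, Pn_eq_card_div_factorial, ← add_div,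
    div_eq_one_iff_eq (by positivity)]
  exact_mod_cast hadd

theorem Pn_or_le (p q : Perm (Fin n) → Prop) : Pn (fun σ => p σ ∨ q σ) ≤ Pn p + Pn q := by
  simp only [Pn_eq_card_div_factorial, ← add_div, filter_or]
  gcongr
  exact_mod_cast card_union_le _ _

theorem Pn_exists_mem_le_sum {ι : Type*} (s : Finset ι) (p : ι → Perm (Fin n) → Prop) :
    Pn (fun σ => ∃ x ∈ s, p x σ) ≤ ∑ x ∈ s, Pn (p x) := by
  have hunion : (univ.filter fun σ => ∃ x ∈ s, p x σ) = s.biUnion fun x => univ.filter (p x) := by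
    ext σ
    simp
  simp only [Pn_eq_card_div_factorial, ← sum_div, hunion]
  gcongr
  exact_mod_cast card_biUnion_le

theorem Pn_apply_eq (i j : Fin n) : Pn (fun σ => σ i = j) = 1 / n := by
  have hcard := card_perm_apply_eq_mul_card i j
  rw [Fintype.card_fin] at hcard
  have hn : (n : ℝ) ≠ 0 := mod_cast i.pos.ne'
  rw [Pn_eq_card_div_factorial, div_eq_div_iff (by positivity) hn, one_mul]
  exact_mod_cast hcard

theorem Pn_avoiding_le {A B : Finset (Fin n)} (hA : A.Nonempty) (hB : B.Nonempty) :
    Pn (fun σ => ∀ a ∈ A, σ a ∉ B) ≤ n / (#A * #B) := by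
  have hcard := card_perm_avoiding_mul_le A B
  rw [Fintype.card_fin] at hcard
  rify at hcard
  rw [← Pn_mul_factorial, mul_right_comm, mul_comm (n ! : ℝ)] at hcard
  have := hA.card_pos
  have := hB.card_pos
  exact (le_div_iff₀ (by positivity)).2 (le_of_mul_le_mul_right hcard (by positivity))

theorem cycleLenAt_eq_minimalPeriod (σ : Perm (Fin n)) (i : Fin n) :
    cycleLenAt σ i = Function.minimalPeriod σ i :=
  card_filter_sameCycle σ i

theorem Pn_apply_eq_and_cycleLenAt_lt_le {i j : Fin n} (hij : i ≠ j) {L : ℕ} (hL : L < n) :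
    Pn (fun σ => σ i = j ∧ cycleLenAt σ i < L) ≤ L / (n * (n - L)) := by
  have hL' : (0 : ℝ) < n - L := sub_pos.2 (mod_cast hL)
  have hcard := card_perm_apply_eq_and_minimalPeriod_lt_mul_le hij L
  simp only [Fintype.card_fin, ← cycleLenAt_eq_minimalPeriod] at hcard
  replace hcard := (Nat.cast_le (α := ℝ)).2 hcard
  rw [Nat.cast_mul, Nat.cast_mul, Nat.cast_sub hL.le, ← Pn_mul_factorial, ← Pn_mul_factorial,
    mul_right_comm, mul_right_comm (Pn _) _ (L : ℝ)] at hcard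
  calc Pn (fun σ => σ i = j ∧ cycleLenAt σ i < L)
      ≤ Pn (fun σ => σ i = j) * L / (n - L) :=
        (le_div_iff₀ hL').2 (le_of_mul_le_mul_right hcard (by positivity))
    _ = L / (n * (n - L)) := by
        rw [Pn_apply_eq]
        field_simp

end UniformProbability

section LargeDisplacement

variable {n : ℕ}

theorem card_filter_le_val_add (n k : ℕ) : #{i : Fin n | n ≤ i + k} = min n k := by
  rw [← Fin.card_filter_val_lt]
  refine card_equiv Fin.revPerm fun i => ?_
  simp only [mem_filter_univ, Fin.revPerm_apply, Fin.val_rev]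
  omega

theorem Pn_forall_disp_add_le_le {k : ℕ} (hk : 0 < k) (hkn : k ≤ n) :
    Pn (fun σ : Perm (Fin n) => ∀ i, disp σ i + 2 * k ≤ n) ≤ n / k ^ 2 := by
  set A : Finset (Fin n) := {i | i < k} with hA
  set B : Finset (Fin n) := {i | n ≤ i + k} with hB
  have card_A : #A = k := by rw [hA, Fin.card_filter_val_lt, min_eq_right hkn]
  have card_B : #B = k := by rw [hB, card_filter_le_val_add, min_eq_right hkn]
  have avoids : ∀ σ : Perm (Fin n), (∀ i, disp σ i + 2 * k ≤ n) → ∀ a ∈ A, σ a ∉ B := by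
    intro σ hσ a ha hσa
    have := hσ a
    simp only [hA, hB, mem_filter_univ] at ha hσa
    unfold disp at this
    omega
  calc Pn (fun σ : Perm (Fin n) => ∀ i, disp σ i + 2 * k ≤ n)
      ≤ Pn (fun σ => ∀ a ∈ A, σ a ∉ B) := Pn_mono avoids
    _ ≤ n / (#A * #B) := Pn_avoiding_le (card_pos.1 (by omega)) (card_pos.1 (by omega))
    _ = n / k ^ 2 := by rw [card_A, card_B, sq]

theorem card_pairs_lt_natAbs_sub_add_le (n m : ℕ) :
    #{p : Fin n × Fin n | n < ((p.2 : ℤ) - p.1).natAbs + m} ≤ 2 * m ^ 2 := by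
  set A : Finset (Fin n) := {i | i < m} with hA
  set B : Finset (Fin n) := {i | n ≤ i + m} with hB
  have card_A : #A ≤ m := by rw [hA, Fin.card_filter_val_lt]; exact min_le_right n m
  have card_B : #B ≤ m := by rw [hB, card_filter_le_val_add]; exact min_le_right n m
  have hsub : ({p : Fin n × Fin n | n < ((p.2 : ℤ) - p.1).natAbs + m} : Finset _) ⊆
      A ×ˢ B ∪ B ×ˢ A := by
    rintro ⟨i, j⟩ hij
    simp only [hA, hB, mem_filter_univ, mem_union, mem_product] at hij ⊢
    omega
  calc _ ≤ #(A ×ˢ B ∪ B ×ˢ A) := card_le_card hsub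
    _ ≤ #A * #B + #B * #A := by simpa only [card_product] using card_union_le (A ×ˢ B) (B ×ˢ A)
    _ ≤ m * m + m * m := by gcongr
    _ = 2 * m ^ 2 := by ring

theorem Pn_exists_disp_large_and_cycleLenAt_lt_le {m L : ℕ} (hm : m ≤ n) (hL : L < n) :
    Pn (fun σ : Perm (Fin n) => ∃ i, n < disp σ i + m ∧ cycleLenAt σ i < L) ≤
      2 * m ^ 2 * (L / (n * (n - L))) := by
  have hL' : (0 : ℝ) < n - L := sub_pos.2 (mod_cast hL)
  set far : Finset (Fin n × Fin n) := {p | n < ((p.2 : ℤ) - p.1).natAbs + m} with hfar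
  have ne_of_mem_far : ∀ p ∈ far, p.1 ≠ p.2 := by
    intro p hp heq
    simp only [hfar, mem_filter_univ, heq] at hp
    omega
  calc Pn (fun σ : Perm (Fin n) => ∃ i, n < disp σ i + m ∧ cycleLenAt σ i < L)
      ≤ Pn (fun σ => ∃ p ∈ far, σ p.1 = p.2 ∧ cycleLenAt σ p.1 < L) :=
        Pn_mono fun σ ⟨i, hdisp, hcycle⟩ =>
          ⟨(i, σ i), (mem_filter_univ _).2 hdisp, rfl, hcycle⟩
    _ ≤ ∑ p ∈ far, Pn (fun σ => σ p.1 = p.2 ∧ cycleLenAt σ p.1 < L) :=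
        Pn_exists_mem_le_sum far fun p σ => σ p.1 = p.2 ∧ cycleLenAt σ p.1 < L
    _ ≤ #far * (L / (n * (n - L)) : ℝ) := by
        rw [← nsmul_eq_mul]
        exact sum_le_card_nsmul _ _ _ fun p hp =>
          Pn_apply_eq_and_cycleLenAt_lt_le (ne_of_mem_far p hp) hL
    _ ≤ 2 * m ^ 2 * (L / (n * (n - L))) := by
        gcongr
        exact_mod_cast hfar ▸ card_pairs_lt_natAbs_sub_add_le n m

theorem Pn_exists_max_disp_and_cycleLenAt_lt_le {k L : ℕ} (hk : 0 < k) (hkn : 2 * k ≤ n)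
    (hL : L < n) :
    Pn (fun σ : Perm (Fin n) => ∃ i, (∀ j, disp σ j ≤ disp σ i) ∧ cycleLenAt σ i < L) ≤
      n / k ^ 2 + 8 * k ^ 2 * (L / (n * (n - L))) := by
  calc Pn (fun σ : Perm (Fin n) => ∃ i, (∀ j, disp σ j ≤ disp σ i) ∧ cycleLenAt σ i < L)
      ≤ Pn (fun σ : Perm (Fin n) => (∀ i, disp σ i + 2 * k ≤ n) ∨
          ∃ i, n < disp σ i + 2 * k ∧ cycleLenAt σ i < L) := by
        refine Pn_mono fun σ ⟨i, hmax, hcycle⟩ => ?_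
        rcases le_or_gt (disp σ i + 2 * k) n with hsmall | hlarge
        · exact .inl fun j => (Nat.add_le_add_right (hmax j) _).trans hsmall
        · exact .inr ⟨i, hlarge, hcycle⟩
    _ ≤ n / k ^ 2 + 2 * (2 * k : ℕ) ^ 2 * (L / (n * (n - L))) :=
        (Pn_or_le _ _).trans <| add_le_add (Pn_forall_disp_add_le_le hk (by omega))
          (Pn_exists_disp_large_and_cycleLenAt_lt_le hkn hL)
    _ = n / k ^ 2 + 8 * k ^ 2 * (L / (n * (n - L))) := by
        push_cast
        ring

-- With `K = k ^ 2`, the two error terms balance at `K ≈ n / √(L / n)`.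
theorem balanced_error_le {n r L K : ℝ} (hn : 0 < n) (hr : 0 < r) (hL : L = r ^ 2 * n)
    (hLn : L ≤ n / 2) (hK : n / r ≤ K) (hK' : K ≤ 4 * (n / r)) :
    n / K + 8 * K * (L / (n * (n - L))) ≤ 65 * r := by
  have hnL : n / 2 ≤ n - L := by linarith
  calc n / K + 8 * K * (L / (n * (n - L)))
      ≤ n / (n / r) + 8 * (4 * (n / r)) * (r ^ 2 * n / (n * (n / 2))) := by
        have hL0 : 0 ≤ L := hL ▸ by positivity
        have hnL0 : 0 < n - L := by linarith
        rw [← hL]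
        gcongr
    _ = 65 * r := by
        field_simp
        norm_num

theorem exists_nat_sq_mem_Icc {x : ℝ} (hx : 1 ≤ x) : ∃ k : ℕ, (k : ℝ) ^ 2 ∈ Set.Icc x (4 * x) := by
  have hsqrt : 1 ≤ √x := Real.one_le_sqrt.2 hx
  have hsq : √x ^ 2 = x := Real.sq_sqrt (by linarith)
  have hceil : √x ≤ ⌈√x⌉₊ := Nat.le_ceil _
  have hceil' : (⌈√x⌉₊ : ℝ) ≤ 2 * √x := by linarith [Nat.ceil_lt_add_one (Real.sqrt_nonneg x)]
  refine ⟨⌈√x⌉₊, ?_, ?_⟩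
  · calc x = √x ^ 2 := hsq.symm
      _ ≤ _ := by gcongr
  · calc (⌈√x⌉₊ : ℝ) ^ 2 ≤ (2 * √x) ^ 2 := by gcongr
      _ = 4 * x := by rw [mul_pow, hsq]; norm_num

theorem Pn_exists_max_disp_and_cycleLenAt_lt_le_sqrt (n L : ℕ) :
    Pn (fun σ : Perm (Fin n) => ∃ i, (∀ j, disp σ j ≤ disp σ i) ∧ cycleLenAt σ i < L) ≤
      65 * √(L / n) := by
  rcases n.eq_zero_or_pos with rfl | hn
  · simp [Pn]
  rcases L.eq_zero_or_pos with rfl | hL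
  · simp [Pn]
  set r := √(L / n) with hr
  have hr0 : 0 < r := by positivity
  have hrL : (L : ℝ) = r ^ 2 * n := by
    rw [hr, Real.sq_sqrt (by positivity), div_mul_cancel₀ _ (by positivity)]
  rcases le_or_gt 1 (65 * r) with htrivial | hr65
  · exact (Pn_le_one _).trans htrivial
  have hL1 : (1 : ℝ) ≤ L := mod_cast hL
  have hLn : (L : ℝ) ≤ n / 2 := by
    have : r ^ 2 ≤ 1 / 2 := by nlinarith
    rw [hrL]
    nlinarith
  have hnr : 16 ≤ n * r := by nlinarith
  have hone_le : 1 ≤ n / r := (one_le_div hr0).2 (by linarith [Nat.one_le_cast (α := ℝ).2 hn])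
  obtain ⟨k, hk, hk'⟩ := exists_nat_sq_mem_Icc hone_le
  have hksq : (0 : ℝ) < k ^ 2 := zero_lt_one.trans_le (hone_le.trans hk)
  have hk0 : 0 < k := Nat.pos_of_ne_zero (by rintro rfl; simp at hksq)
  have hkn : 2 * k ≤ n := by
    have : (2 * k : ℝ) ^ 2 ≤ n ^ 2 := by
      calc (2 * k : ℝ) ^ 2 = 4 * k ^ 2 := by ring
        _ ≤ 16 * (n / r) := by linarith
        _ ≤ n * r * (n / r) := by gcongr
        _ = n ^ 2 := by field_simp
    exact_mod_cast le_of_sq_le_sq this (by positivity)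
  exact (Pn_exists_max_disp_and_cycleLenAt_lt_le hk0 hkn (by rify; linarith)).trans
    (balanced_error_le (by positivity) hr0 hrL hLn hk hk')

end LargeDisplacement

theorem isLittleO_natCeil {α : Type*} {l : Filter α} {f g : α → ℝ} (hf : f =o[l] g)
    (hg : (fun _ => (1 : ℝ)) =o[l] g) : (fun x => (⌈f x⌉₊ : ℝ)) =o[l] g := by
  refine (IsBigO.of_norm_le fun x => ?_).trans_isLittleO (hf.norm_left.add hg)
  rw [Real.norm_natCast]
  calc (⌈f x⌉₊ : ℝ) ≤ ⌈‖f x‖⌉₊ := mod_cast Nat.ceil_mono (Real.le_norm_self _)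
    _ ≤ ‖f x‖ + 1 := (Nat.ceil_lt_add_one (norm_nonneg _)).le

theorem cycle_of_argmax_disp_is_long_general {ℓ : ℕ → ℝ}
    (hℓ : ℓ =o[atTop] fun n : ℕ => (n : ℝ)) :
    Tendsto (fun n : ℕ =>
        Pn (fun σ : Perm (Fin n) =>
          ∀ i, (∀ j, disp σ j ≤ disp σ i) → ℓ n ≤ (cycleLenAt σ i : ℝ)))
      atTop (𝓝 1) := by
  have hone : (fun _ : ℕ => (1 : ℝ)) =o[atTop] fun n : ℕ => (n : ℝ) :=
    isLittleO_const_left.2 (.inr (tendsto_norm_atTop_atTop.comp tendsto_natCast_atTop_atTop))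
  have hbound : Tendsto (fun n : ℕ => 1 - 65 * √(⌈ℓ n⌉₊ / n)) atTop (𝓝 1) := by
    have hratio := (isLittleO_natCeil hℓ hone).tendsto_div_nhds_zero
    simpa using (hratio.sqrt.const_mul 65).const_sub 1
  refine tendsto_of_tendsto_of_tendsto_of_le_of_le hbound tendsto_const_nhds (fun n => ?_)
    fun n => Pn_le_one _
  calc 1 - 65 * √(⌈ℓ n⌉₊ / n)
      ≤ 1 - Pn (fun σ : Perm (Fin n) =>
          ∃ i, (∀ j, disp σ j ≤ disp σ i) ∧ cycleLenAt σ i < ⌈ℓ n⌉₊) :=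
        sub_le_sub_left (Pn_exists_max_disp_and_cycleLenAt_lt_le_sqrt n _) 1
    _ = _ := by
        rw [← Pn_not]
        congr! with σ
        simp [Nat.lt_ceil]

/-- Under the uniform measure on `S_n`, with probability tending to `1`, the cycle of
`σ` containing the smallest index `i*(σ)` maximizing `|σ(i) − i|` has length at least
`(log n)^4`. -/
theorem cycle_of_argmax_disp_is_long :
    Tendsto (fun n : ℕ =>
        Pn (fun σ : Equiv.Perm (Fin n) =>
          ∀ i : Fin n, isArgmaxDisp σ i → (Real.log n) ^ 4 ≤ (cycleLenAt σ i : ℝ)))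
      atTop (nhds 1) := by
  exact tendsto_of_tendsto_of_tendsto_of_le_of_le
    (cycle_of_argmax_disp_is_long_general
      (Real.isLittleO_pow_log_id_atTop.comp_tendsto tendsto_natCast_atTop_atTop))
    tendsto_const_nhds (fun n => Pn_mono fun σ h i hi => h i hi.1) fun n => Pn_le_one _
end

section
/- Fix 1 ≤ q < ∞. Let σ be uniformly distributed on S_n, let μ_n = E_n[ρ_q] and s_n = √(Var_n ρ_q). Then there is a constant C such that for all n ≥ 2, sup_{x ∈ ℝ} | P_n[ (ρ^{(1)}_q(σ) − μ_n)/s_n ≤ x ] − Φ(x) | ≤ C (log n)/n^{1/2}. -/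
open scoped BigOperators Classical
open Finset Filter

/-- Variance under the uniform measure on `S_n`. -/
noncomputable def VarN {n : ℕ} (g : Equiv.Perm (Fin n) → ℝ) : ℝ :=
  En (fun σ => (g σ - En g) ^ 2)

/-- Spearman's metric `ρ_q(σ) = Σ_i |σ(i) − i|^q`. -/
noncomputable def rhoq (q : ℝ) {n : ℕ} (σ : Equiv.Perm (Fin n)) : ℝ :=
  ∑ i : Fin n, |((σ i : ℕ) : ℝ) - ((i : ℕ) : ℝ)| ^ q

/-- The oscillation statistic `ρ^{(1)}_q(σ) = Σ_i |σ(i+1) − σ(i)|^q`, indices mod `n`. -/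
noncomputable def oscStat (q : ℝ) {n : ℕ} (σ : Equiv.Perm (Fin n)) : ℝ :=
  ∑ i : Fin n, |((σ (finRotate n i) : ℕ) : ℝ) - ((σ i : ℕ) : ℝ)| ^ q

/-- The standard normal cumulative distribution function `Φ`. -/
noncomputable def stdNormalCDF (x : ℝ) : ℝ :=
  ∫ t in Set.Iic x, Real.exp (-t ^ 2 / 2) / Real.sqrt (2 * Real.pi)

/-!
The oscillation of `σ` is Spearman's `ρ_q` evaluated at the cycle `σ 0 ↦ σ 1 ↦ ⋯ ↦ σ 0`, so it has
the law of `ρ_q` at a uniform `n`-cycle.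

At a uniform permutation, `ρ_q` is a Hoeffding statistic `∑ i, a i (σ i)`, and Stein's method gives
its normal approximation with error `O(n ^ (-1/2))`: composing with a random transposition produces
an exchangeable pair, from which one reads off a zero-bias coupling at distance `O(D)`, where `D`
bounds the oscillation of the rows of the standardized matrix `a`.

A uniform permutation and a uniform `n`-cycle are built together by inserting one point at a time.
The two insertions at size `n` differ with probability `1 / n`, and then at most two more values
disagree, so the Hamming distance of the two permutations has an exponential moment that is
polynomial in `n`. It is therefore `O(log n)` up to an event of probability `O(1 / n)`, which turns
the error `D` into `D log n`.
-/

section Gaussian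

open MeasureTheory ProbabilityTheory Topology

local notation "γ" => gaussianReal 0 1
local notation "φ" => gaussianPDFReal 0 1

lemma gaussianPDFReal_zero_one (t : ℝ) : φ t = Real.exp (-t ^ 2 / 2) / √(2 * Real.pi) := by
  simp [gaussianPDFReal, div_eq_inv_mul]

lemma continuous_gaussianPDFReal_zero_one : Continuous φ := by
  simp only [funext gaussianPDFReal_zero_one]
  fun_prop

lemma hasDerivAt_gaussianPDFReal_zero_one (t : ℝ) : HasDerivAt φ (-t * φ t) t := by
  have exponent : HasDerivAt (fun t : ℝ ↦ -t ^ 2 / 2) (-t) t :=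
    ((hasDerivAt_pow 2 t).neg.div_const 2).congr_deriv (by push_cast; ring)
  simp only [funext gaussianPDFReal_zero_one]
  exact (exponent.exp.div_const _).congr_deriv (by ring)

lemma gaussianPDFReal_zero_one_le_one (t : ℝ) : φ t ≤ 1 := by
  rw [gaussianPDFReal_zero_one, div_le_one (by positivity)]
  calc Real.exp (-t ^ 2 / 2) ≤ 1 := Real.exp_le_one_iff.2 (by linarith [sq_nonneg t])
    _ ≤ √(2 * Real.pi) := Real.one_le_sqrt.2 (by linarith [Real.pi_gt_three])

lemma one_sixth_le_gaussianPDFReal_zero_one {t : ℝ} (ht : |t| ≤ 1) : 1 / 6 ≤ φ t := by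
  have sqrt_le : √(2 * Real.pi) ≤ 3 :=
    (Real.sqrt_le_left (by norm_num)).2 (by linarith [Real.pi_lt_d2])
  have sq_le : t ^ 2 ≤ 1 := (sq_le_one_iff_abs_le_one t).2 ht
  rw [gaussianPDFReal_zero_one, le_div_iff₀ (by positivity)]
  linarith [Real.add_one_le_exp (-t ^ 2 / 2)]

lemma tendsto_gaussianPDFReal_zero_one_atTop : Tendsto φ atTop (𝓝 0) := by
  have exponent : Tendsto (fun t : ℝ ↦ -t ^ 2 / 2) atTop atBot := by
    simpa only [neg_div, Function.comp_def] using tendsto_neg_atTop_atBot.comp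
      ((tendsto_pow_atTop (α := ℝ) two_ne_zero).atTop_div_const two_pos)
  simpa only [funext gaussianPDFReal_zero_one, zero_div, Function.comp_def] using
    (Real.tendsto_exp_atBot.comp exponent).div_const √(2 * Real.pi)

lemma setIntegral_gaussianReal_zero_one {s : Set ℝ} (hs : MeasurableSet s) (g : ℝ → ℝ) :
    ∫ t in s, g t ∂γ = ∫ t in s, φ t * g t := by
  rw [gaussianReal_of_var_ne_zero 0 one_ne_zero,
    setIntegral_withDensity_eq_setIntegral_toReal_smul (measurable_gaussianPDF 0 1)
      (ae_of_all _ fun _ ↦ ENNReal.ofReal_lt_top) _ hs]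
  simp [toReal_gaussianPDF]

lemma integrable_gaussianReal_zero_one_iff {g : ℝ → ℝ} :
    Integrable g γ ↔ Integrable fun t ↦ φ t * g t := by
  rw [gaussianReal_of_var_ne_zero 0 one_ne_zero,
    integrable_withDensity_iff_integrable_smul' (measurable_gaussianPDF 0 1)
      (ae_of_all _ fun _ ↦ ENNReal.ofReal_lt_top)]
  simp [toReal_gaussianPDF]

lemma measureReal_gaussianReal_zero_one {s : Set ℝ} (hs : MeasurableSet s) :
    (γ).real s = ∫ t in s, φ t := by
  simpa using setIntegral_gaussianReal_zero_one hs fun _ ↦ 1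

lemma stdNormalCDF_eq_measureReal_Iic (x : ℝ) : stdNormalCDF x = (γ).real (Set.Iic x) := by
  simp only [measureReal_gaussianReal_zero_one measurableSet_Iic, stdNormalCDF,
    gaussianPDFReal_zero_one]

lemma stdNormalCDF_sub_le {x y : ℝ} (hxy : x ≤ y) : stdNormalCDF y - stdNormalCDF x ≤ y - x := by
  simp only [stdNormalCDF_eq_measureReal_Iic, measureReal_gaussianReal_zero_one measurableSet_Iic]
  have integrable := integrable_gaussianPDFReal 0 1
  rw [intervalIntegral.integral_Iic_sub_Iic integrable.integrableOn integrable.integrableOn]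
  calc ∫ t in x..y, φ t ≤ ∫ _ in x..y, (1 : ℝ) :=
        intervalIntegral.integral_mono_on hxy
          (continuous_gaussianPDFReal_zero_one.intervalIntegrable _ _)
          (continuous_const.intervalIntegrable _ _) fun t _ ↦ gaussianPDFReal_zero_one_le_one t
    _ = y - x := by simp

lemma mul_measureReal_Ioi_le_gaussianPDFReal {w : ℝ} (hw : 0 ≤ w) :
    w * (γ).real (Set.Ioi w) ≤ φ w := by
  have antideriv (t : ℝ) (_ : t ∈ Set.Ici w) : HasDerivAt (fun t ↦ -φ t) (t * φ t) t :=
    (hasDerivAt_gaussianPDFReal_zero_one t).neg.congr_deriv (by ring)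
  have limit : Tendsto (fun t ↦ -φ t) atTop (𝓝 0) := by
    simpa using tendsto_gaussianPDFReal_zero_one_atTop.neg
  have integrable := integrableOn_Ioi_deriv_of_nonneg' antideriv
    (fun t ht ↦ mul_nonneg (hw.trans (le_of_lt ht)) (gaussianPDFReal_nonneg 0 1 t)) limit
  rw [measureReal_gaussianReal_zero_one measurableSet_Ioi, ← integral_const_mul]
  calc ∫ t in Set.Ioi w, w * φ t ≤ ∫ t in Set.Ioi w, t * φ t :=
        setIntegral_mono_on ((integrable_gaussianPDFReal 0 1).integrableOn.const_mul w) integrable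
          measurableSet_Ioi fun t ht ↦
            mul_le_mul_of_nonneg_right (le_of_lt ht) (gaussianPDFReal_nonneg 0 1 t)
    _ = φ w := by
        rw [integral_Ioi_of_hasDerivAt_of_tendsto' antideriv integrable limit]
        ring

lemma neg_mul_measureReal_Iic_le_gaussianPDFReal {w : ℝ} (hw : w ≤ 0) :
    -w * (γ).real (Set.Iic w) ≤ φ w := by
  have even (t : ℝ) : φ (-t) = φ t := by simp [gaussianPDFReal_zero_one]
  have tails : (γ).real (Set.Iic w) = (γ).real (Set.Ioi (-w)) := by
    simp only [measureReal_gaussianReal_zero_one measurableSet_Iic,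
      measureReal_gaussianReal_zero_one measurableSet_Ioi, ← integral_comp_neg_Iic, even]
  rw [tails, ← even w]
  exact mul_measureReal_Ioi_le_gaussianPDFReal (neg_nonneg.2 hw)

/-- The bounded solution of Stein's equation `f' w - w * f w = h w - ∫ h ∂γ` for the standard
Gaussian measure `γ`. -/
noncomputable def steinSolution (h : ℝ → ℝ) (w : ℝ) : ℝ :=
  (∫ t in Set.Iic w, (h t - ∫ s, h s ∂γ) ∂γ) / φ w

section SteinSolution

variable {h : ℝ → ℝ} {c : ℝ}

lemma hasDerivAt_steinSolution (h_cont : Continuous h) (h_int : Integrable h γ) (w : ℝ) :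
    HasDerivAt (steinSolution h) (w * steinSolution h w + (h w - ∫ t, h t ∂γ)) w := by
  set g : ℝ → ℝ := fun t ↦ φ t * (h t - ∫ s, h s ∂γ) with g_def
  have g_cont : Continuous g :=
    continuous_gaussianPDFReal_zero_one.mul (h_cont.sub continuous_const)
  have g_int : Integrable g :=
    integrable_gaussianReal_zero_one_iff.1 (h_int.sub (integrable_const _))
  have primitive : HasDerivAt (fun w ↦ ∫ t in Set.Iic w, g t) (g w) w := by
    have split (x : ℝ) :
        ∫ t in Set.Iic x, g t = (∫ t in Set.Iic 0, g t) + ∫ t in (0 : ℝ)..x, g t := by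
      rw [← intervalIntegral.integral_Iic_sub_Iic g_int.integrableOn g_int.integrableOn]
      ring
    rw [funext split]
    exact (g_cont.integral_hasStrictDerivAt 0 w).hasDerivAt.const_add _
  have pos := gaussianPDFReal_pos 0 1 w one_ne_zero
  have unfold_sol : steinSolution h = fun w ↦ (∫ t in Set.Iic w, g t) / φ w :=
    funext fun w ↦ by rw [steinSolution, setIntegral_gaussianReal_zero_one measurableSet_Iic]
  rw [unfold_sol]
  refine (primitive.div (hasDerivAt_gaussianPDFReal_zero_one w) pos.ne').congr_deriv ?_
  field_simp
  rw [g_def]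
  ring

lemma abs_setIntegral_sub_gaussianMean_le (hc : ∀ t, |h t - ∫ s, h s ∂γ| ≤ c) (s : Set ℝ) :
    |∫ t in s, (h t - ∫ s, h s ∂γ) ∂γ| ≤ c * (γ).real s :=
  norm_setIntegral_le_of_norm_le_const (f := fun t ↦ h t - ∫ s, h s ∂γ) (measure_lt_top γ s)
    fun t _ ↦ hc t

lemma abs_mul_steinSolution_le (h_int : Integrable h γ) (hc : ∀ t, |h t - ∫ s, h s ∂γ| ≤ c)
    (w : ℝ) : |w * steinSolution h w| ≤ c := by
  have c_nonneg : 0 ≤ c := (abs_nonneg _).trans (hc 0)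
  have pos := gaussianPDFReal_pos 0 1 w one_ne_zero
  have centred_int : Integrable (fun t ↦ h t - ∫ s, h s ∂γ) γ := h_int.sub (integrable_const _)
  rw [steinSolution, ← mul_div_assoc, abs_div, abs_mul, abs_of_pos pos, div_le_iff₀ pos]
  rcases le_total 0 w with hw | hw
  · have complement : ∫ t in Set.Iic w, (h t - ∫ s, h s ∂γ) ∂γ
        = -∫ t in Set.Ioi w, (h t - ∫ s, h s ∂γ) ∂γ := by
      rw [eq_neg_iff_add_eq_zero, ← Set.compl_Iic, integral_add_compl measurableSet_Iic centred_int,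
        integral_sub h_int (integrable_const _)]
      simp
    rw [complement, abs_neg, abs_of_nonneg hw]
    calc w * _ ≤ w * (c * (γ).real (Set.Ioi w)) :=
          mul_le_mul_of_nonneg_left (abs_setIntegral_sub_gaussianMean_le hc _) hw
      _ = c * (w * (γ).real (Set.Ioi w)) := by ring
      _ ≤ c * φ w := mul_le_mul_of_nonneg_left (mul_measureReal_Ioi_le_gaussianPDFReal hw) c_nonneg
  · rw [abs_of_nonpos hw]
    calc -w * _ ≤ -w * (c * (γ).real (Set.Iic w)) :=
          mul_le_mul_of_nonneg_left (abs_setIntegral_sub_gaussianMean_le hc _) (neg_nonneg.2 hw)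
      _ = c * (-w * (γ).real (Set.Iic w)) := by ring
      _ ≤ c * φ w :=
          mul_le_mul_of_nonneg_left (neg_mul_measureReal_Iic_le_gaussianPDFReal hw) c_nonneg

lemma abs_steinSolution_le (h_int : Integrable h γ) (hc : ∀ t, |h t - ∫ s, h s ∂γ| ≤ c) (w : ℝ) :
    |steinSolution h w| ≤ 6 * c := by
  have c_nonneg : 0 ≤ c := (abs_nonneg _).trans (hc 0)
  rcases le_total 1 |w| with hw | hw
  · have := abs_mul_steinSolution_le h_int hc w
    rw [abs_mul] at this
    nlinarith [abs_nonneg (steinSolution h w)]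
  · have pos := gaussianPDFReal_pos 0 1 w one_ne_zero
    rw [steinSolution, abs_div, abs_of_pos pos, div_le_iff₀ pos]
    calc _ ≤ c * (γ).real (Set.Iic w) := abs_setIntegral_sub_gaussianMean_le hc _
      _ ≤ c * 1 := mul_le_mul_of_nonneg_left measureReal_le_one c_nonneg
      _ ≤ 6 * c * φ w := by nlinarith [one_sixth_le_gaussianPDFReal_zero_one hw]

lemma abs_steinSolution_sub_le (h_cont : Continuous h) (h_int : Integrable h γ)
    (hc : ∀ t, |h t - ∫ s, h s ∂γ| ≤ c) (x w : ℝ) :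
    |steinSolution h x - steinSolution h w| ≤ 2 * c * |x - w| :=
  convex_univ.norm_image_sub_le_of_norm_hasDerivWithin_le
    (fun w _ ↦ (hasDerivAt_steinSolution h_cont h_int w).hasDerivWithinAt)
    (fun w _ ↦ (norm_add_le _ _).trans <| by
      rw [two_mul]
      exact add_le_add (abs_mul_steinSolution_le h_int hc w) (hc w))
    (Set.mem_univ w) (Set.mem_univ x)

lemma abs_mul_steinSolution_sub_le (h_cont : Continuous h) (h_int : Integrable h γ)
    (hc : ∀ t, |h t - ∫ s, h s ∂γ| ≤ c) (x w : ℝ) :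
    |x * steinSolution h x - w * steinSolution h w| ≤ (6 + 2 * |w|) * c * |x - w| := by
  calc |x * steinSolution h x - w * steinSolution h w|
      = |(x - w) * steinSolution h x + w * (steinSolution h x - steinSolution h w)| := by ring_nf
    _ ≤ |x - w| * |steinSolution h x| + |w| * |steinSolution h x - steinSolution h w| := by
        rw [← abs_mul, ← abs_mul]
        exact abs_add_le _ _
    _ ≤ |x - w| * (6 * c) + |w| * (2 * c * |x - w|) := by
        gcongr
        · exact abs_steinSolution_le h_int hc x
        · exact abs_steinSolution_sub_le h_cont h_int hc x w
    _ = (6 + 2 * |w|) * c * |x - w| := by ring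

end SteinSolution

lemma integrable_gaussianReal_of_mem_Icc {h : ℝ → ℝ} (h_cont : Continuous h)
    (h_mem : ∀ t, h t ∈ Set.Icc 0 1) : Integrable h γ :=
  Integrable.of_mem_Icc 0 1 h_cont.measurable.aemeasurable (ae_of_all _ h_mem)

lemma exists_continuous_approx_indicator_Iic {a b : ℝ} (hab : a < b) :
    ∃ h : ℝ → ℝ, Continuous h ∧ (∀ t, h t ∈ Set.Icc 0 1) ∧ (∀ t ≤ a, h t = 1) ∧
      (∀ t, b ≤ t → h t = 0) ∧ stdNormalCDF a ≤ ∫ t, h t ∂γ ∧ ∫ t, h t ∂γ ≤ stdNormalCDF b := by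
  obtain ⟨h, h_zero, h_one, h_mem⟩ := exists_continuous_zero_one_of_isClosed
    (isClosed_Ici (a := b)) (isClosed_Iic (a := a)) (Set.Iic_disjoint_Ici.2 hab.not_ge).symm
  have h_int := integrable_gaussianReal_of_mem_Icc h.continuous h_mem
  refine ⟨h, h.continuous, h_mem, fun t ht ↦ h_one ht, fun t ht ↦ h_zero ht, ?_, ?_⟩ <;>
    rw [stdNormalCDF_eq_measureReal_Iic, ← integral_indicator_one measurableSet_Iic]
  · exact integral_mono ((integrable_const 1).indicator measurableSet_Iic) h_int fun t ↦
      Set.indicator_le' (fun t ht ↦ (h_one ht).ge) (fun t _ ↦ (h_mem t).1) t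
  · exact integral_mono h_int ((integrable_const 1).indicator measurableSet_Iic) fun t ↦
      Set.le_indicator (fun t _ ↦ (h_mem t).2) (fun t ht ↦ (h_zero (Set.notMem_Iic.1 ht).le).le) t

end Gaussian

/-- The distribution function of `X` under the uniform measure on the finite sample space `Ω`. -/
noncomputable def uniformCDF {Ω : Type*} [Fintype Ω] (X : Ω → ℝ) (x : ℝ) : ℝ :=
  𝔼 ω, if X ω ≤ x then 1 else 0

section Stein

open MeasureTheory ProbabilityTheory

local notation "γ" => gaussianReal 0 1

variable {Ω : Type*} [Fintype Ω] {X B : Ω → ℝ} {δ : ℝ} {h : ℝ → ℝ}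

/-- Up to the factor `𝔼 X ^ 2`, the functional `f' ↦ 𝔼 X * f X` is the mean of `f'` at a point
within distance `δ` of `X`; that is, `X` has a zero-bias coupling `X*` with `|X* - X| ≤ δ`. The
coupling is only seen through upper envelopes `B` of `f'` near `X`, which avoids constructing `X*`
(a continuous random variable) on an enlarged sample space. -/
def HasZeroBiasWithin (X : Ω → ℝ) (δ : ℝ) : Prop :=
  ∀ f f' : ℝ → ℝ, (∀ w, HasDerivAt f (f' w) w) →
    ∀ B : Ω → ℝ, (∀ ω x, |x - X ω| ≤ δ → f' x ≤ B ω) →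
      𝔼 ω, X ω * f (X ω) ≤ (𝔼 ω, X ω ^ 2) * 𝔼 ω, B ω

variable [Nonempty Ω]

lemma expect_abs_le_one (hX : 𝔼 ω, X ω ^ 2 = 1) : 𝔼 ω, |X ω| ≤ 1 := by
  calc 𝔼 ω, |X ω| ≤ 𝔼 ω, (X ω ^ 2 + 1) / 2 :=
        expect_le_expect fun ω _ ↦ by nlinarith [sq_nonneg (|X ω| - 1), sq_abs (X ω)]
    _ = 1 := by
        rw [← expect_div, expect_add_distrib, hX, expect_const univ_nonempty]
        norm_num

lemma gaussianMean_le_expect_add (zero_bias : HasZeroBiasWithin X δ) (hX : 𝔼 ω, X ω ^ 2 = 1)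
    (hδ : 0 ≤ δ) (h_cont : Continuous h) (h_mem : ∀ t, h t ∈ Set.Icc 0 1)
    (hB : ∀ ω x, |x - X ω| ≤ δ → h x ≤ B ω) : ∫ t, h t ∂γ ≤ 𝔼 ω, B ω + 8 * δ := by
  set N := ∫ t, h t ∂γ
  have h_int := integrable_gaussianReal_of_mem_Icc h_cont h_mem
  have N_nonneg : 0 ≤ N := integral_nonneg fun t ↦ (h_mem t).1
  have N_le_one : N ≤ 1 := by
    simpa using integral_mono h_int (integrable_const 1) fun t ↦ (h_mem t).2
  have centred (t : ℝ) : |h t - N| ≤ 1 := by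
    rw [abs_le]
    constructor <;> linarith [(h_mem t).1, (h_mem t).2]
  set f := steinSolution h
  have envelope (ω : Ω) (x : ℝ) (hx : |x - X ω| ≤ δ) :
      x * f x + (h x - N) ≤ X ω * f (X ω) + (6 + 2 * |X ω|) * δ + (B ω - N) := by
    have := (le_abs_self _).trans (abs_mul_steinSolution_sub_le h_cont h_int centred x (X ω))
    rw [mul_one] at this
    have := this.trans (mul_le_mul_of_nonneg_left hx (by positivity))
    linarith [hB ω x hx]
  have key := zero_bias f _ (hasDerivAt_steinSolution h_cont h_int) _ envelope
  simp only [hX, one_mul, expect_add_distrib, expect_sub_distrib, add_mul, ← expect_mul,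
    ← mul_expect, expect_const univ_nonempty] at key
  nlinarith [expect_abs_le_one hX]

lemma abs_uniformCDF_sub_stdNormalCDF_le_of_hasZeroBiasWithin (zero_bias : HasZeroBiasWithin X δ)
    (hX : 𝔼 ω, X ω ^ 2 = 1) (hδ : 0 ≤ δ) (z : ℝ) :
    |uniformCDF X z - stdNormalCDF z| ≤ 9 * δ := by
  refine abs_sub_le_iff.2 ⟨le_of_forall_pos_le_add fun ε hε ↦ ?_,
    le_of_forall_pos_le_add fun ε hε ↦ ?_⟩
  · obtain ⟨h, h_cont, h_mem, h_one, -, -, h_le⟩ :=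
      exists_continuous_approx_indicator_Iic (lt_add_of_pos_right (z + δ) hε)
    have bound : ∫ t, (1 - h t) ∂γ ≤ 𝔼 ω, (1 - if X ω ≤ z then 1 else 0) + 8 * δ := by
      refine gaussianMean_le_expect_add zero_bias hX hδ (continuous_const.sub h_cont)
        (fun t ↦ Set.Icc.one_sub_mem (h_mem t)) fun ω x hx ↦ ?_
      split_ifs with hω
      · rw [h_one x (by linarith [(abs_le.1 hx).2]), sub_self]
      · linarith [(h_mem x).1]
    rw [integral_sub (integrable_const 1) (integrable_gaussianReal_of_mem_Icc h_cont h_mem),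
      expect_sub_distrib, expect_const univ_nonempty] at bound
    simp only [integral_const, probReal_univ, one_smul] at bound
    rw [uniformCDF]
    linarith [stdNormalCDF_sub_le (show z ≤ z + δ + ε by linarith)]
  · obtain ⟨h, h_cont, h_mem, -, h_zero, h_ge, -⟩ :=
      exists_continuous_approx_indicator_Iic (sub_lt_self (z - δ) hε)
    have bound : ∫ t, h t ∂γ ≤ uniformCDF X z + 8 * δ := by
      refine gaussianMean_le_expect_add zero_bias hX hδ h_cont h_mem fun ω x hx ↦ ?_
      split_ifs with hω
      · exact (h_mem x).2
      · exact (h_zero x (by linarith [(abs_le.1 hx).1])).le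
    linarith [stdNormalCDF_sub_le (show z - δ - ε ≤ z by linarith)]

end Stein

lemma exists_hasDerivAt_slope {f f' : ℝ → ℝ} (hf : ∀ w, HasDerivAt f (f' w) w) (x y : ℝ) :
    ∃ c, |c - x| ≤ |y - x| ∧ f x - f y = (x - y) * f' c := by
  have cont : Continuous f := continuous_iff_continuousAt.2 fun w ↦ (hf w).continuousAt
  rcases lt_trichotomy x y with hxy | rfl | hxy
  · obtain ⟨c, ⟨hxc, hcy⟩, hc⟩ :=
      exists_hasDerivAt_eq_slope f f' hxy cont.continuousOn fun w _ ↦ hf w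
    refine ⟨c, abs_le_abs_of_nonneg (by linarith) (by linarith), ?_⟩
    rw [hc]
    field_simp [(sub_pos.2 hxy).ne']
    ring
  · exact ⟨x, by simp⟩
  · obtain ⟨c, ⟨hyc, hcx⟩, hc⟩ :=
      exists_hasDerivAt_eq_slope f f' hxy cont.continuousOn fun w _ ↦ hf w
    refine ⟨c, abs_le_abs_of_nonpos (by linarith) (by linarith), ?_⟩
    rw [hc]
    field_simp [(sub_pos.2 hxy).ne']

section Hoeffding

open Equiv Equiv.Perm

variable {α : Type*}

/-- The mixed second difference of the matrix `a` over the rows `i, j` and the columns `k, l`: the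
decrease of `∑ i, a i (σ i)` when the values `σ i = k` and `σ j = l` are exchanged. -/
def mixedDiff (a : α → α → ℝ) (i j k l : α) : ℝ := a i k + a j l - a i l - a j k

lemma mixedDiff_sub_const (a : α → α → ℝ) (m : ℝ) (i j k l : α) :
    mixedDiff (fun i j ↦ a i j - m) i j k l = mixedDiff a i j k l := by
  simp only [mixedDiff]
  ring

section MatchPair

variable [DecidableEq α]

/-- A product of two transpositions sending `k` to `k'` and `l` to `l'`. -/
def matchPair (k l k' l' : α) : Perm α := swap (swap k k' l) l' * swap k k'

lemma matchPair_apply_left {k l k' l' : α} (h : k = l ↔ k' = l') : matchPair k l k' l' k = k' := by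
  obtain rfl | hkl := eq_or_ne k l
  · simp [matchPair, h.1 rfl]
  · have ne_moved : k' ≠ swap k k' l := fun hk' ↦
      hkl ((swap k k').injective ((swap_apply_left _ _).trans hk'))
    rw [matchPair, mul_apply, swap_apply_left, swap_apply_of_ne_of_ne ne_moved (mt h.2 hkl)]

lemma matchPair_apply_right (k l k' l' : α) : matchPair k l k' l' l = l' := by
  simp [matchPair]

/-- Give `σ` the values of `τ` at `i` and `j` and conversely, using `matchPair`, and then exchange
the two permutations, so that the values at `i` and `j` of either component do not change. -/
def exchangePair (i j : α) (p : Perm α × Perm α) : Perm α × Perm α :=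
  let π := matchPair (p.1 i) (p.1 j) (p.2 i) (p.2 j)
  (π⁻¹ * p.2, π * p.1)

lemma exchangePair_involutive (i j : α) : Function.Involutive (exchangePair i j) := by
  intro ⟨σ, τ⟩
  set π := matchPair (σ i) (σ j) (τ i) (τ j) with π_def
  have hi : π (σ i) = τ i := matchPair_apply_left (by simp)
  have hj : π (σ j) = τ j := matchPair_apply_right _ _ _ _
  have hi' : π⁻¹ (τ i) = σ i := inv_eq_iff_eq.2 hi.symm
  have hj' : π⁻¹ (τ j) = σ j := inv_eq_iff_eq.2 hj.symm
  simp only [exchangePair, mul_apply, ← π_def, hi, hj, hi', hj', inv_mul_cancel_left,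
    mul_inv_cancel_left]

end MatchPair

variable [Fintype α]

/-- Hoeffding's combinatorial statistic of the matrix `a`. -/
def hoeffdingStat (a : α → α → ℝ) (σ : Perm α) : ℝ := ∑ i, a i (σ i)

lemma sum_sum_mixedDiff {a : α → α → ℝ} (centred : ∑ i, ∑ j, a i j = 0) (σ : Perm α) :
    ∑ i, ∑ j, mixedDiff a i j (σ i) (σ j) = 2 * Fintype.card α * hoeffdingStat a σ := by
  have permuted (i : α) : ∑ j, a i (σ j) = ∑ j, a i j := Equiv.sum_comp σ _
  have permuted' : ∑ i, ∑ j, a j (σ i) = 0 := by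
    rw [sum_comm]
    simp only [permuted, centred]
  simp only [mixedDiff, sum_sub_distrib, sum_add_distrib, permuted, permuted', centred,
    sum_const, card_univ, nsmul_eq_mul, ← mul_sum, hoeffdingStat]
  ring

variable [DecidableEq α] {a : α → α → ℝ} {D : ℝ}

lemma hammingDist_mul_left_le (π σ : Perm α) : hammingDist ⇑(π * σ) σ ≤ #π.support :=
  card_le_card_of_injOn σ (fun _ hi ↦ mem_support.2 (mem_filter.1 hi).2) σ.injective.injOn

lemma hammingDist_mul_swap_le (σ : Perm α) (i j : α) : hammingDist ⇑(σ * swap i j) σ ≤ 2 := by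
  refine (card_le_card fun x hx ↦ ?_).trans (card_le_two (a := i) (b := j))
  by_contra hx'
  simp only [mem_insert, mem_singleton, not_or] at hx'
  simp [swap_apply_of_ne_of_ne hx'.1 hx'.2] at hx

lemma abs_hoeffdingStat_sub_le (hD : ∀ i k l, |a i k - a i l| ≤ D) (σ τ : Perm α) :
    |hoeffdingStat a σ - hoeffdingStat a τ| ≤ D * hammingDist ⇑σ τ := by
  have agree (i : α) (_ : i ∈ univ) (hi : i ∉ univ.filter fun i ↦ σ i ≠ τ i) :
      a i (σ i) - a i (τ i) = 0 := by
    rw [show σ i = τ i by simpa using hi, sub_self]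
  rw [hoeffdingStat, hoeffdingStat, ← sum_sub_distrib, ← sum_subset (subset_univ _) agree]
  calc _ ≤ ∑ i with σ i ≠ τ i, |a i (σ i) - a i (τ i)| := abs_sum_le_sum_abs _ _
    _ ≤ #{i | σ i ≠ τ i} • D := sum_le_card_nsmul _ _ _ fun i _ ↦ hD i _ _
    _ = D * hammingDist ⇑σ τ := by rw [nsmul_eq_mul, mul_comm]; rfl

lemma hoeffdingStat_sub_hoeffdingStat_mul_swap (a : α → α → ℝ) (σ : Perm α) (i j : α) :
    hoeffdingStat a σ - hoeffdingStat a (σ * swap i j) = mixedDiff a i j (σ i) (σ j) := by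
  rw [hoeffdingStat, hoeffdingStat, ← sum_sub_distrib]
  obtain rfl | hij := eq_or_ne i j
  · simp [mixedDiff]
  · rw [Fintype.sum_eq_add i j hij fun x hx ↦ by simp [swap_apply_of_ne_of_ne hx.1 hx.2]]
    simp only [Perm.coe_mul, Function.comp_apply, swap_apply_left, swap_apply_right, mixedDiff]
    ring

lemma expect_mixedDiff_mul (a : α → α → ℝ) (f : ℝ → ℝ) (i j : α) :
    2 * 𝔼 σ : Perm α, mixedDiff a i j (σ i) (σ j) * f (hoeffdingStat a σ) =
      𝔼 σ : Perm α, mixedDiff a i j (σ i) (σ j) *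
        (f (hoeffdingStat a σ) - f (hoeffdingStat a (σ * swap i j))) := by
  have swapped : 𝔼 σ : Perm α, mixedDiff a i j (σ i) (σ j) * f (hoeffdingStat a σ) =
      -𝔼 σ : Perm α, mixedDiff a i j (σ i) (σ j) * f (hoeffdingStat a (σ * swap i j)) := by
    rw [← expect_neg_distrib]
    refine Fintype.expect_equiv (Equiv.mulRight (swap i j)) _ _ fun σ ↦ ?_
    simp only [mixedDiff, coe_mulRight, Perm.coe_mul, Function.comp_apply, swap_apply_left,
      swap_apply_right, mul_assoc, swap_mul_self, mul_one]
    ring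
  simp only [mul_sub, expect_sub_distrib]
  linarith

lemma expect_hoeffdingStat_mul (centred : ∑ i, ∑ j, a i j = 0) (f : ℝ → ℝ) :
    4 * Fintype.card α * 𝔼 σ, hoeffdingStat a σ * f (hoeffdingStat a σ) =
      ∑ i, ∑ j, 𝔼 σ : Perm α, mixedDiff a i j (σ i) (σ j) *
        (f (hoeffdingStat a σ) - f (hoeffdingStat a (σ * swap i j))) := by
  simp only [← expect_mixedDiff_mul, ← mul_sum, ← expect_sum_comm, ← sum_mul,
    sum_sum_mixedDiff centred, mul_assoc, ← mul_expect]
  ring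

lemma expect_hoeffdingStat_sq (centred : ∑ i, ∑ j, a i j = 0) :
    4 * Fintype.card α * 𝔼 σ, hoeffdingStat a σ ^ 2 =
      ∑ i, ∑ j, 𝔼 σ : Perm α, mixedDiff a i j (σ i) (σ j) ^ 2 := by
  simpa only [id_eq, hoeffdingStat_sub_hoeffdingStat_mul_swap, ← sq] using
    expect_hoeffdingStat_mul centred id

lemma card_support_swap_le (x y : α) : #(swap x y).support ≤ 2 := by
  obtain rfl | hxy := eq_or_ne x y
  · simp
  · exact (card_support_swap hxy).le

lemma card_support_matchPair_le (k l k' l' : α) : #(matchPair k l k' l').support ≤ 4 :=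
  calc #(matchPair k l k' l').support ≤ _ := card_le_card (support_mul_le _ _)
    _ ≤ _ := card_union_le _ _
    _ ≤ 2 + 2 := add_le_add (card_support_swap_le _ _) (card_support_swap_le _ _)

lemma expect_apply_pair_mul_le {g : α → α → ℝ} (hg : ∀ k l, 0 ≤ g k l) {G B : Perm α → ℝ} {i j : α}
    (hGB : ∀ σ τ : Perm α, G (matchPair (σ i) (σ j) (τ i) (τ j) * σ) ≤ B σ) :
    𝔼 σ : Perm α, g (σ i) (σ j) * G σ ≤ (𝔼 σ : Perm α, g (σ i) (σ j)) * 𝔼 σ, B σ := by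
  calc 𝔼 σ : Perm α, g (σ i) (σ j) * G σ
      = 𝔼 p : Perm α × Perm α, g (p.2 i) (p.2 j) * G p.2 := by
        rw [← univ_product_univ, expect_product]
        simp
    _ = 𝔼 p : Perm α × Perm α, g (p.2 i) (p.2 j) *
          G (matchPair (p.1 i) (p.1 j) (p.2 i) (p.2 j) * p.1) :=
        (Fintype.expect_bijective _ (exchangePair_involutive i j).bijective _ _ fun p ↦ by
          simp [exchangePair, matchPair_apply_left, matchPair_apply_right]).symm
    _ ≤ 𝔼 p : Perm α × Perm α, g (p.2 i) (p.2 j) * B p.1 :=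
        expect_le_expect fun p _ ↦ mul_le_mul_of_nonneg_left (hGB p.1 p.2) (hg _ _)
    _ = (𝔼 σ : Perm α, g (σ i) (σ j)) * 𝔼 σ, B σ := by
        rw [← univ_product_univ, expect_product, expect_comm]
        simp only [expect_mul_expect]

lemma hasZeroBiasWithin_hoeffdingStat [Nonempty α] (centred : ∑ i, ∑ j, a i j = 0)
    (hD : ∀ i k l, |a i k - a i l| ≤ D) : HasZeroBiasWithin (hoeffdingStat a) (6 * D) := by
  intro f f' hf B hB
  set W := hoeffdingStat a
  have D_nonneg (i : α) : 0 ≤ D := (abs_nonneg _).trans (hD i i i)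
  have pair_le (i j : α) : 𝔼 σ : Perm α, mixedDiff a i j (σ i) (σ j) *
      (f (W σ) - f (W (σ * swap i j))) ≤
        (𝔼 σ : Perm α, mixedDiff a i j (σ i) (σ j) ^ 2) * 𝔼 σ, B σ := by
    choose c hc_dist hc using fun σ : Perm α ↦ exists_hasDerivAt_slope hf (W σ) (W (σ * swap i j))
    simp only [hc, W, hoeffdingStat_sub_hoeffdingStat_mul_swap, ← mul_assoc, ← sq]
    refine expect_apply_pair_mul_le (g := fun k l ↦ mixedDiff a i j k l ^ 2)
      (fun k l ↦ sq_nonneg _) fun σ τ ↦ hB σ _ ?_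
    set σ' := matchPair (σ i) (σ j) (τ i) (τ j) * σ
    have swap_dist : |W (σ' * swap i j) - W σ'| ≤ D * 2 :=
      (abs_hoeffdingStat_sub_le hD _ _).trans <| mul_le_mul_of_nonneg_left
        (mod_cast hammingDist_mul_swap_le σ' i j) (D_nonneg i)
    have match_dist : |W σ' - W σ| ≤ D * 4 :=
      (abs_hoeffdingStat_sub_le hD _ _).trans <| mul_le_mul_of_nonneg_left
        (mod_cast (hammingDist_mul_left_le _ _).trans (card_support_matchPair_le _ _ _ _))
        (D_nonneg i)
    linarith [abs_sub_le (c σ') (W σ') (W σ), hc_dist σ']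
  have card_pos : (0 : ℝ) < 4 * Fintype.card α := by positivity
  rw [← mul_le_mul_iff_right₀ card_pos, ← mul_assoc, expect_hoeffdingStat_sq centred, sum_mul,
    expect_hoeffdingStat_mul centred]
  refine sum_le_sum fun i _ ↦ ?_
  rw [sum_mul]
  exact sum_le_sum fun j _ ↦ pair_le i j

end Hoeffding

section HoeffdingMoments

open Equiv Equiv.Perm

variable {α : Type*} [Fintype α]

lemma hoeffdingStat_sub_div [Nonempty α] (a : α → α → ℝ) (m s : ℝ) (σ : Perm α) :
    hoeffdingStat (fun i j ↦ (a i j - m / Fintype.card α) / s) σ = (hoeffdingStat a σ - m) / s := by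
  simp only [hoeffdingStat, ← sum_div, sum_sub_distrib, sum_const, card_univ, nsmul_eq_mul]
  field_simp

variable [DecidableEq α] {a : α → α → ℝ} {D c : ℝ}

lemma expect_perm_apply (g : α → ℝ) (i : α) : 𝔼 σ : Perm α, g (σ i) = 𝔼 k, g k := by
  have : Nonempty α := ⟨i⟩
  have point_independent (k : α) : 𝔼 σ : Perm α, g (σ k) = 𝔼 σ : Perm α, g (σ i) :=
    Fintype.expect_equiv (Equiv.mulRight (swap i k)) _ _ fun σ ↦ by simp
  calc 𝔼 σ : Perm α, g (σ i) = 𝔼 k : α, 𝔼 σ : Perm α, g (σ k) := by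
        simp only [point_independent, Fintype.expect_const]
    _ = 𝔼 k, g k := by
        rw [expect_comm]
        simp only [fun σ : Perm α ↦ Fintype.expect_equiv σ (fun k ↦ g (σ k)) g fun _ ↦ rfl,
          Fintype.expect_const]

lemma expect_perm_apply_pair (g : α → α → ℝ) {i j : α} (hij : i ≠ j) :
    𝔼 σ : Perm α, g (σ i) (σ j) = 𝔼 p ∈ univ.offDiag, g p.1 p.2 := by
  have pair_independent (p : α × α) (hp : p ∈ univ.offDiag) :
      𝔼 σ : Perm α, g (σ p.1) (σ p.2) = 𝔼 σ : Perm α, g (σ i) (σ j) := by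
    have ne : p.1 ≠ p.2 := (mem_offDiag.1 hp).2.2
    refine Fintype.expect_equiv (Equiv.mulRight (matchPair i j p.1 p.2)) _ _ fun σ ↦ ?_
    simp [matchPair_apply_left (iff_of_false hij ne), matchPair_apply_right]
  have reindex (σ : Perm α) :
      𝔼 p ∈ univ.offDiag, g (σ p.1) (σ p.2) = 𝔼 p ∈ univ.offDiag, g p.1 p.2 :=
    expect_equiv (σ.prodCongr σ) (by simp) fun p _ ↦ rfl
  have nonempty : (univ.offDiag : Finset (α × α)).Nonempty := ⟨(i, j), by simpa using hij⟩
  calc 𝔼 σ : Perm α, g (σ i) (σ j) = 𝔼 p ∈ univ.offDiag, 𝔼 σ : Perm α, g (σ p.1) (σ p.2) := by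
        rw [expect_congr rfl pair_independent, expect_const nonempty]
    _ = 𝔼 p ∈ univ.offDiag, g p.1 p.2 := by
        rw [expect_comm]
        simp only [reindex, expect_const univ_nonempty]

lemma card_mul_expect_hoeffdingStat (a : α → α → ℝ) :
    Fintype.card α * 𝔼 σ, hoeffdingStat a σ = ∑ i, ∑ j, a i j := by
  simp only [hoeffdingStat, expect_sum_comm, expect_perm_apply, mul_sum, Fintype.card_mul_expect]

lemma mul_le_sq_mul_expect_perm_apply_pair {g : α → α → ℝ} (hg : ∀ k l, 0 ≤ g k l) {S T : Finset α}
    (hST : Disjoint S T) (hc : ∀ k ∈ S, ∀ l ∈ T, c ≤ g k l) {i j : α} (hij : i ≠ j) :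
    #S * #T * c ≤ Fintype.card α ^ 2 * 𝔼 σ : Perm α, g (σ i) (σ j) := by
  have subset : S ×ˢ T ⊆ univ.offDiag := fun p hp ↦ by
    obtain ⟨hk, hl⟩ := mem_product.1 hp
    simpa using disjoint_iff_ne.1 hST _ hk _ hl
  have card_le : (#(univ.offDiag : Finset (α × α)) : ℝ) ≤ Fintype.card α ^ 2 := by
    rw [← Nat.cast_pow, sq, ← Fintype.card_prod]
    exact mod_cast card_le_univ _
  rw [expect_perm_apply_pair g hij]
  calc #S * #T * c = #(S ×ˢ T) • c := by simp
    _ ≤ ∑ p ∈ S ×ˢ T, g p.1 p.2 := card_nsmul_le_sum _ _ _ fun p hp ↦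
        hc _ (mem_product.1 hp).1 _ (mem_product.1 hp).2
    _ ≤ ∑ p ∈ univ.offDiag, g p.1 p.2 := sum_le_sum_of_subset_of_nonneg subset fun p _ _ ↦ hg _ _
    _ = #(univ.offDiag : Finset (α × α)) * 𝔼 p ∈ univ.offDiag, g p.1 p.2 :=
        (card_mul_expect _ _).symm
    _ ≤ _ := mul_le_mul_of_nonneg_right card_le (expect_nonneg fun p _ ↦ hg _ _)

lemma le_expect_hoeffdingStat_sq {S T S' T' : Finset α} (centred : ∑ i, ∑ j, a i j = 0)
    (hST : Disjoint S T) (hST' : Disjoint S' T') (hc : 0 ≤ c)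
    (h : ∀ i ∈ S, ∀ j ∈ T, ∀ k ∈ S', ∀ l ∈ T', c ≤ |mixedDiff a i j k l|) :
    #S * #T * (#S' * #T' * c ^ 2) ≤ 4 * Fintype.card α ^ 3 * 𝔼 σ, hoeffdingStat a σ ^ 2 := by
  set e : α → α → ℝ := fun i j ↦ 𝔼 σ : Perm α, mixedDiff a i j (σ i) (σ j) ^ 2
  have e_nonneg (i j : α) : 0 ≤ e i j := expect_nonneg fun σ _ ↦ sq_nonneg _
  have pair_ge (p : α × α) (hp : p ∈ S ×ˢ T) :
      #S' * #T' * c ^ 2 ≤ Fintype.card α ^ 2 * e p.1 p.2 := by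
    obtain ⟨hi, hj⟩ := mem_product.1 hp
    refine mul_le_sq_mul_expect_perm_apply_pair (g := fun k l ↦ mixedDiff a p.1 p.2 k l ^ 2)
      (fun k l ↦ sq_nonneg _) hST' (fun k hk l hl ↦ ?_) (disjoint_iff_ne.1 hST _ hi _ hj)
    exact (pow_le_pow_left₀ hc (h _ hi _ hj k hk l hl) 2).trans_eq (sq_abs _)
  calc #S * #T * (#S' * #T' * c ^ 2) = #(S ×ˢ T) • (#S' * #T' * c ^ 2) := by simp
    _ ≤ ∑ p ∈ S ×ˢ T, Fintype.card α ^ 2 * e p.1 p.2 := card_nsmul_le_sum _ _ _ pair_ge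
    _ ≤ ∑ p : α × α, Fintype.card α ^ 2 * e p.1 p.2 :=
        sum_le_univ_sum_of_nonneg fun p ↦ mul_nonneg (sq_nonneg _) (e_nonneg _ _)
    _ = Fintype.card α ^ 2 * (4 * Fintype.card α * 𝔼 σ, hoeffdingStat a σ ^ 2) := by
        rw [← mul_sum, Fintype.sum_prod_type, expect_hoeffdingStat_sq centred]
    _ = 4 * Fintype.card α ^ 3 * 𝔼 σ, hoeffdingStat a σ ^ 2 := by ring

variable [Nonempty α]

lemma sum_sum_sub_expect_hoeffdingStat_div (a : α → α → ℝ) (s : ℝ) :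
    ∑ i, ∑ j, (a i j - (𝔼 σ, hoeffdingStat a σ) / Fintype.card α) / s = 0 := by
  rw [← card_mul_expect_hoeffdingStat]
  simp only [hoeffdingStat_sub_div, ← expect_div, expect_sub_distrib, Fintype.expect_const,
    sub_self, zero_div, mul_zero]

lemma le_variance_hoeffdingStat {S T S' T' : Finset α} (hST : Disjoint S T) (hST' : Disjoint S' T')
    (hc : 0 ≤ c) (h : ∀ i ∈ S, ∀ j ∈ T, ∀ k ∈ S', ∀ l ∈ T', c ≤ |mixedDiff a i j k l|) :
    #S * #T * (#S' * #T' * c ^ 2) ≤ 4 * Fintype.card α ^ 3 *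
      𝔼 σ, (hoeffdingStat a σ - 𝔼 τ, hoeffdingStat a τ) ^ 2 := by
  have centred := sum_sum_sub_expect_hoeffdingStat_div a 1
  have key := le_expect_hoeffdingStat_sq centred hST hST' hc
    fun i hi j hj k hk l hl ↦ by
      simpa only [div_one, mixedDiff_sub_const] using h i hi j hj k hk l hl
  simp only [hoeffdingStat_sub_div] at key
  simpa only [div_one] using key

lemma abs_uniformCDF_hoeffdingStat_sub_stdNormalCDF_le {V : ℝ} (hV : 0 < V)
    (variance : 𝔼 σ, (hoeffdingStat a σ - 𝔼 τ, hoeffdingStat a τ) ^ 2 = V)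
    (hD : ∀ i k l, |a i k - a i l| ≤ D) (z : ℝ) :
    |uniformCDF (fun σ ↦ (hoeffdingStat a σ - 𝔼 τ, hoeffdingStat a τ) / √V) z - stdNormalCDF z| ≤
      54 * (D / √V) := by
  set m := 𝔼 τ, hoeffdingStat a τ
  have D_nonneg : 0 ≤ D := ‹Nonempty α›.elim fun i ↦ (abs_nonneg _).trans (hD i i i)
  have standardized_diff (i k l : α) : |(a i k - m / Fintype.card α) / √V -
      (a i l - m / Fintype.card α) / √V| ≤ D / √V := by
    rw [← sub_div, sub_sub_sub_cancel_right, abs_div, abs_of_nonneg (Real.sqrt_nonneg V)]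
    exact div_le_div_of_nonneg_right (hD i k l) (Real.sqrt_nonneg V)
  have zero_bias : HasZeroBiasWithin (fun σ ↦ (hoeffdingStat a σ - m) / √V) (6 * (D / √V)) := by
    simp only [← hoeffdingStat_sub_div]
    exact hasZeroBiasWithin_hoeffdingStat (sum_sum_sub_expect_hoeffdingStat_div a √V)
      standardized_diff
  have unit_variance : 𝔼 σ, ((hoeffdingStat a σ - m) / √V) ^ 2 = 1 := by
    simp only [div_pow, ← expect_div, variance, Real.sq_sqrt hV.le, div_self hV.ne']
  refine (abs_uniformCDF_sub_stdNormalCDF_le_of_hasZeroBiasWithin zero_bias unit_variance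
    (by positivity) z).trans_eq ?_
  ring

end HoeffdingMoments

section Spearman

open Equiv

lemma En_eq_expect {n : ℕ} (g : Perm (Fin n) → ℝ) : En g = 𝔼 σ, g σ :=
  (Fintype.expect_eq_sum_div_card g).symm

lemma VarN_eq_expect {n : ℕ} (g : Perm (Fin n) → ℝ) : VarN g = 𝔼 σ, (g σ - 𝔼 τ, g τ) ^ 2 := by
  simp only [VarN, En_eq_expect]

lemma Pn_le_eq_uniformCDF {n : ℕ} (X : Perm (Fin n) → ℝ) (x : ℝ) :
    Pn (fun σ ↦ X σ ≤ x) = uniformCDF X x := by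
  rw [Pn, uniformCDF, Fintype.expect_eq_sum_div_card, sum_boole]

/-- The matrix whose Hoeffding statistic is Spearman's `ρ_q`. -/
noncomputable def spearmanMatrix (q : ℝ) (n : ℕ) (i j : Fin n) : ℝ :=
  |((j : ℕ) : ℝ) - ((i : ℕ) : ℝ)| ^ q

lemma rhoq_eq_hoeffdingStat (q : ℝ) (n : ℕ) :
    rhoq q (n := n) = hoeffdingStat (spearmanMatrix q n) :=
  rfl

/-- The indices in the lowest quarter of `0, …, n - 1`. -/
def lowestQuarter (n : ℕ) : Finset (Fin n) := {i | 4 * (i : ℕ) + 1 ≤ n}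

/-- The indices in the highest quarter of `0, …, n - 1`. -/
def highestQuarter (n : ℕ) : Finset (Fin n) := (lowestQuarter n).map Fin.revPerm.toEmbedding

variable {q : ℝ} {n : ℕ}

lemma mem_lowestQuarter {i : Fin n} : i ∈ lowestQuarter n ↔ 4 * (i : ℝ) ≤ n - 1 := by
  rw [lowestQuarter, mem_filter_univ, le_sub_iff_add_le]
  norm_cast

lemma mem_highestQuarter {i : Fin n} : i ∈ highestQuarter n ↔ 3 * ((n : ℝ) - 1) ≤ 4 * i := by
  have rev_cast : ((i.rev : ℕ) : ℝ) = n - 1 - i := by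
    rw [Fin.val_rev, Nat.cast_sub i.is_lt]
    push_cast
    ring
  simp only [highestQuarter, mem_map_equiv, Fin.revPerm_symm, Fin.revPerm_apply,
    mem_lowestQuarter, rev_cast]
  constructor <;> intro h <;> linarith

lemma le_four_mul_card_lowestQuarter (n : ℕ) : n ≤ 4 * #(lowestQuarter n) := by
  have initial : lowestQuarter n = univ.filter fun i : Fin n ↦ (i : ℕ) < (n + 3) / 4 :=
    filter_congr fun i _ ↦ by omega
  rw [initial, Fin.card_filter_val_lt]
  omega

lemma card_highestQuarter (n : ℕ) : #(highestQuarter n) = #(lowestQuarter n) := card_map _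

lemma disjoint_quarters (hn : 2 ≤ n) : Disjoint (lowestQuarter n) (highestQuarter n) :=
  disjoint_left.2 fun i hi hi' ↦ by
    have : (2 : ℝ) ≤ n := mod_cast hn
    linarith [mem_lowestQuarter.1 hi, mem_highestQuarter.1 hi']

lemma abs_spearmanMatrix_sub_le (hq : 0 ≤ q) (i k l : Fin n) :
    |spearmanMatrix q n i k - spearmanMatrix q n i l| ≤ ((n : ℝ) - 1) ^ q := by
  have entry_le (k : Fin n) : spearmanMatrix q n i k ≤ ((n : ℝ) - 1) ^ q := by
    have hi : (i : ℝ) + 1 ≤ n := mod_cast i.is_lt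
    have hk : (k : ℝ) + 1 ≤ n := mod_cast k.is_lt
    refine Real.rpow_le_rpow (abs_nonneg _) (abs_le.2 ⟨?_, ?_⟩) hq <;>
      linarith [(Nat.cast_nonneg i : (0 : ℝ) ≤ (i : ℕ)), (Nat.cast_nonneg k : (0 : ℝ) ≤ (k : ℕ))]
  have entry_nonneg (k : Fin n) : 0 ≤ spearmanMatrix q n i k := Real.rpow_nonneg (abs_nonneg _) q
  exact abs_sub_le_of_nonneg_of_le (entry_nonneg k) (entry_le k) (entry_nonneg l) (entry_le l)

lemma le_abs_mixedDiff_spearmanMatrix (hq : 0 ≤ q) {i j k l : Fin n} (hi : i ∈ lowestQuarter n)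
    (hj : j ∈ highestQuarter n) (hk : k ∈ lowestQuarter n) (hl : l ∈ highestQuarter n) :
    2 * ((2 ^ q - 1) * (((n : ℝ) - 1) / 4) ^ q) ≤ |mixedDiff (spearmanMatrix q n) i j k l| := by
  rw [mem_lowestQuarter] at hi hk
  rw [mem_highestQuarter] at hj hl
  have val_le (i : Fin n) : (i : ℝ) + 1 ≤ n := mod_cast i.is_lt
  have val_nonneg (i : Fin n) : (0 : ℝ) ≤ (i : ℕ) := Nat.cast_nonneg _
  have near_le {i k : Fin n} (h : |((k : ℕ) : ℝ) - (i : ℕ)| ≤ ((n : ℝ) - 1) / 4) :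
      spearmanMatrix q n i k ≤ (((n : ℝ) - 1) / 4) ^ q :=
    Real.rpow_le_rpow (abs_nonneg _) h hq
  have le_far {i k : Fin n} (h : 2 * (((n : ℝ) - 1) / 4) ≤ |((k : ℕ) : ℝ) - (i : ℕ)|) :
      2 ^ q * (((n : ℝ) - 1) / 4) ^ q ≤ spearmanMatrix q n i k := by
    have width_nonneg : 0 ≤ ((n : ℝ) - 1) / 4 := by linarith [val_le i, val_nonneg i]
    rw [← Real.mul_rpow two_pos.le width_nonneg]
    exact Real.rpow_le_rpow (by positivity) h hq
  have ik : spearmanMatrix q n i k ≤ _ :=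
    near_le (abs_le.2 ⟨by linarith [val_nonneg k], by linarith [val_nonneg i]⟩)
  have jl : spearmanMatrix q n j l ≤ _ :=
    near_le (abs_le.2 ⟨by linarith [val_le j], by linarith [val_le l]⟩)
  have il : _ ≤ spearmanMatrix q n i l := le_far (le_abs.2 (Or.inl (by linarith)))
  have jk : _ ≤ spearmanMatrix q n j k := le_far (le_abs.2 (Or.inr (by linarith)))
  refine le_abs.2 (Or.inr ?_)
  rw [mixedDiff]
  linarith

lemma le_VarN_rhoq (hq : 0 ≤ q) (hn : 2 ≤ n) :
    n * ((2 ^ q - 1) * (((n : ℝ) - 1) / 4) ^ q) ^ 2 ≤ 256 * VarN (rhoq q (n := n)) := by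
  have : NeZero n := ⟨by omega⟩
  have hn' : (2 : ℝ) ≤ n := mod_cast hn
  set u := (2 ^ q - 1) * (((n : ℝ) - 1) / 4) ^ q
  have u_nonneg : 0 ≤ u := mul_nonneg (sub_nonneg.2 (Real.one_le_rpow one_le_two hq))
    (Real.rpow_nonneg (by linarith) q)
  set V := VarN (rhoq q (n := n))
  have card_ge : (n : ℝ) ≤ 4 * #(lowestQuarter n) := mod_cast le_four_mul_card_lowestQuarter n
  have key := le_variance_hoeffdingStat (a := spearmanMatrix q n) (disjoint_quarters hn)
    (disjoint_quarters hn) (mul_nonneg two_pos.le u_nonneg) fun i hi j hj k hk l hl ↦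
      le_abs_mixedDiff_spearmanMatrix hq hi hj hk hl
  rw [← rhoq_eq_hoeffdingStat, ← VarN_eq_expect, card_highestQuarter, Fintype.card_fin] at key
  have cancel : (n : ℝ) ^ 3 * (n * u ^ 2) ≤ n ^ 3 * (256 * V) := by
    calc (n : ℝ) ^ 3 * (n * u ^ 2) = n ^ 4 * u ^ 2 := by ring
      _ ≤ (4 * #(lowestQuarter n)) ^ 4 * u ^ 2 := by gcongr
      _ ≤ n ^ 3 * (256 * V) := by linarith
  exact le_of_mul_le_mul_left cancel (by positivity)

lemma VarN_rhoq_pos (hq : 0 < q) (hn : 2 ≤ n) : 0 < VarN (rhoq q (n := n)) := by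
  have hn' : (2 : ℝ) ≤ n := mod_cast hn
  have := sub_pos.2 (Real.one_lt_rpow one_lt_two hq)
  have := Real.rpow_pos_of_pos (show 0 < ((n : ℝ) - 1) / 4 by linarith) q
  have : 0 < n * ((2 ^ q - 1) * (((n : ℝ) - 1) / 4) ^ q) ^ 2 := by positivity
  linarith [le_VarN_rhoq hq.le hn]

lemma rpow_div_sqrt_VarN_rhoq_nonneg (q : ℝ) (hn : 1 ≤ n) :
    0 ≤ ((n : ℝ) - 1) ^ q / √(VarN (rhoq q (n := n))) :=
  div_nonneg (Real.rpow_nonneg (sub_nonneg.2 (Nat.one_le_cast.2 hn)) q) (Real.sqrt_nonneg _)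

lemma rpow_div_sqrt_VarN_rhoq_le (hq : 0 < q) (hn : 2 ≤ n) :
    ((n : ℝ) - 1) ^ q / √(VarN (rhoq q (n := n))) ≤ 16 * 4 ^ q / (2 ^ q - 1) / √n := by
  have hn' : (2 : ℝ) ≤ n := mod_cast hn
  have gap_pos := sub_pos.2 (Real.one_lt_rpow one_lt_two hq)
  have width_pos := Real.rpow_pos_of_pos (show 0 < ((n : ℝ) - 1) / 4 by linarith) q
  have sqrt_le : √n * ((2 ^ q - 1) * (((n : ℝ) - 1) / 4) ^ q) ≤
      16 * √(VarN (rhoq q (n := n))) := by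
    have := Real.sqrt_le_sqrt (le_VarN_rhoq hq.le hn)
    rwa [Real.sqrt_mul n.cast_nonneg, Real.sqrt_sq (by positivity),
      show (256 : ℝ) = 16 ^ 2 by norm_num, Real.sqrt_mul (by norm_num),
      Real.sqrt_sq (by norm_num)] at this
  have scale : ((n : ℝ) - 1) ^ q = 4 ^ q * (((n : ℝ) - 1) / 4) ^ q := by
    rw [← Real.mul_rpow (by norm_num) (by linarith)]
    ring_nf
  rw [div_div, div_le_div_iff₀ (Real.sqrt_pos.2 (VarN_rhoq_pos hq hn)) (by positivity), scale]
  calc 4 ^ q * (((n : ℝ) - 1) / 4) ^ q * ((2 ^ q - 1) * √n)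
      = 4 ^ q * (√n * ((2 ^ q - 1) * (((n : ℝ) - 1) / 4) ^ q)) := by ring
    _ ≤ 4 ^ q * (16 * √(VarN (rhoq q (n := n)))) := by gcongr
    _ = _ := by ring

end Spearman

section CycleCoupling

open Equiv Perm

/-- The cyclic permutation `σ 0 ↦ σ 1 ↦ ⋯ ↦ σ (n - 1) ↦ σ 0`. If `σ` is uniform, this is a uniform
`n`-cycle. -/
def cycleThrough {n : ℕ} (σ : Perm (Fin n)) : Perm (Fin n) := σ * finRotate n * σ⁻¹

lemma cycleThrough_mul_finRotate {n : ℕ} (σ : Perm (Fin n)) :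
    cycleThrough (σ * finRotate n) = cycleThrough σ := by
  unfold cycleThrough
  group

lemma oscStat_eq_rhoq_cycleThrough (q : ℝ) {n : ℕ} (σ : Perm (Fin n)) :
    oscStat q σ = rhoq q (cycleThrough σ) := by
  rw [rhoq, ← Equiv.sum_comp σ]
  simp [oscStat, cycleThrough]

variable {n : ℕ}

lemma decomposeFin_symm_eq_swap_mul (x : Fin (n + 1)) (σ : Perm (Fin n)) :
    decomposeFin.symm (x, σ) = swap 0 x * decomposeFin.symm (0, σ) := by
  ext i
  cases i using Fin.cases <;> simp

lemma hammingDist_decomposeFin_symm_le (x : Fin (n + 1)) (σ τ : Perm (Fin n)) :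
    hammingDist ⇑(decomposeFin.symm (x, σ)) (decomposeFin.symm (x, τ)) ≤ hammingDist ⇑σ τ := by
  refine (card_le_card (t := (univ.filter fun i ↦ σ i ≠ τ i).image Fin.succ) fun i hi ↦ ?_).trans
    card_image_le
  cases i using Fin.cases with
  | zero => simp at hi
  | succ i => simpa using hi

lemma hammingDist_decomposeFin_symm_zero_le (x : Fin (n + 1)) (σ τ : Perm (Fin n)) :
    hammingDist ⇑(decomposeFin.symm (x, σ)) (decomposeFin.symm (0, τ)) ≤ hammingDist ⇑σ τ + 2 := by
  have move_zero : hammingDist ⇑(decomposeFin.symm (x, σ)) (decomposeFin.symm (0, σ)) ≤ 2 := by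
    rw [decomposeFin_symm_eq_swap_mul]
    exact (hammingDist_mul_left_le _ _).trans (card_support_swap_le _ _)
  linarith [hammingDist_triangle ⇑(decomposeFin.symm (x, σ)) (decomposeFin.symm (0, σ))
    (decomposeFin.symm (0, τ)), hammingDist_decomposeFin_symm_le 0 σ τ]

lemma expect_decomposeFin_symm (h : Perm (Fin (n + 1)) → ℝ) :
    𝔼 σ, h σ = 𝔼 σ, 𝔼 x, h (decomposeFin.symm (x, σ)) := by
  rw [← Fintype.expect_equiv decomposeFin.symm (fun p ↦ h (decomposeFin.symm p)) h fun _ ↦ rfl,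
    ← univ_product_univ, expect_product, expect_comm]

section RotationInvariance

variable {H : Perm (Fin (n + 1)) → Fin (n + 1) → ℝ}

lemma expect_apply_eq_of_mul_finRotate (hH : ∀ σ y, H (σ * finRotate (n + 1)) y = H σ y)
    (k : Fin (n + 1)) : 𝔼 σ, H σ (σ k) = 𝔼 σ, H σ (σ 0) := by
  induction k using Fin.induction with
  | zero => rfl
  | succ k ih =>
    rw [← ih]
    exact Fintype.expect_equiv (Equiv.mulRight (finRotate (n + 1))) _ _ fun σ ↦ by simp [hH]

lemma expect_expect_eq_of_mul_finRotate (hH : ∀ σ y, H (σ * finRotate (n + 1)) y = H σ y) :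
    𝔼 σ, 𝔼 y, H σ y = 𝔼 σ, H σ (σ 0) := by
  have reindex (σ : Perm (Fin (n + 1))) : 𝔼 y, H σ y = 𝔼 k, H σ (σ k) :=
    (Fintype.expect_equiv σ _ _ fun _ ↦ rfl).symm
  simp only [reindex]
  rw [expect_comm]
  simp only [expect_apply_eq_of_mul_finRotate hH, Fintype.expect_const]

end RotationInvariance

lemma cycleThrough_decomposeFin_symm_zero (σ : Perm (Fin (n + 1))) :
    cycleThrough (decomposeFin.symm (0, σ)) =
      decomposeFin.symm ((σ 0).succ, cycleThrough σ) := by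
  rw [cycleThrough, mul_inv_eq_iff_eq_mul, finRotate_succ_eq_decomposeFin]
  ext i : 1
  cases i using Fin.cases with
  | zero =>
    rw [mul_apply, mul_apply, decomposeFin_symm_apply_zero, decomposeFin_symm_apply_zero,
      decomposeFin_symm_apply_zero, ← Fin.succ_zero_eq_one, decomposeFin_symm_apply_succ]
    simp
  | succ i =>
    simp only [cycleThrough, mul_apply, decomposeFin_symm_apply_succ, swap_self, refl_apply,
      coe_inv, symm_apply_apply, ← Fin.succ_zero_eq_one]
    obtain hi | hi := eq_or_ne (finRotate (n + 1) i) 0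
    · simp [hi]
    · have hσi : σ (finRotate (n + 1) i) ≠ σ 0 := σ.injective.ne hi
      rw [swap_apply_of_ne_of_ne (Fin.succ_ne_zero _) ((Fin.succ_injective _).ne hi),
        swap_apply_of_ne_of_ne (Fin.succ_ne_zero _) ((Fin.succ_injective _).ne hσi)]
      simp

lemma expect_ite_eq_zero (c : ℝ) :
    𝔼 y : Fin (n + 1), (if y = 0 then (n + 1) * c else 0) = c := by
  rw [Fintype.expect_eq_sum_div_card, Fintype.sum_ite_eq', Fintype.card_fin]
  push_cast
  field_simp

-- Since `cycleThrough σ` only depends on `σ` up to rotation, one may condition on `σ 0 = 0`; for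
-- the same reason the image of `0` is then uniform given the rest of the cycle.
lemma expect_cycleThrough_succ (h : Perm (Fin (n + 2)) → ℝ) :
    𝔼 σ, h (cycleThrough σ) =
      𝔼 σ : Perm (Fin (n + 1)), 𝔼 p : Fin (n + 1),
        h (decomposeFin.symm (p.succ, cycleThrough σ)) := by
  calc 𝔼 σ, h (cycleThrough σ)
      = 𝔼 σ, 𝔼 y : Fin (n + 2), if y = 0 then ((n + 1 : ℕ) + 1) * h (cycleThrough σ) else 0 := by
        simp only [expect_ite_eq_zero]
    _ = 𝔼 σ : Perm (Fin (n + 2)), if σ 0 = 0 then ((n + 1 : ℕ) + 1) * h (cycleThrough σ) else 0 :=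
        expect_expect_eq_of_mul_finRotate fun σ y ↦ by rw [cycleThrough_mul_finRotate]
    _ = 𝔼 σ, h (cycleThrough (decomposeFin.symm (0, σ))) := by
        rw [expect_decomposeFin_symm]
        refine expect_congr rfl fun σ _ ↦ ?_
        rw [← expect_ite_eq_zero (h (cycleThrough (decomposeFin.symm (0, σ))))]
        refine expect_congr rfl fun y _ ↦ ?_
        rw [decomposeFin_symm_apply_zero]
        split_ifs with hy
        · rw [hy]
        · rfl
    _ = 𝔼 σ : Perm (Fin (n + 1)), h (decomposeFin.symm ((σ 0).succ, cycleThrough σ)) := by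
        simp only [cycleThrough_decomposeFin_symm_zero]
    _ = _ := (expect_expect_eq_of_mul_finRotate
        (H := fun σ y ↦ h (decomposeFin.symm (y.succ, cycleThrough σ)))
        fun σ y ↦ by rw [cycleThrough_mul_finRotate]).symm

/-- Under the uniform measure on the finite sample space `Ω`, the random permutation `P` is uniform
and the random permutation `T` is a uniform `n`-cycle. -/
structure IsCycleCoupling {Ω : Type*} [Fintype Ω] (P T : Ω → Perm (Fin n)) : Prop where
  expect_uniform (h : Perm (Fin n) → ℝ) : 𝔼 ω, h (P ω) = 𝔼 σ, h σ
  expect_cycle (h : Perm (Fin n) → ℝ) : 𝔼 ω, h (T ω) = 𝔼 σ, h (cycleThrough σ)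

/-- The value `x`, redrawn as the nonzero value `p + 1` if it is `0`. It turns a uniform point of
`{0, …, n + 1}` into a uniform point of `{1, …, n + 1}` that seldom differs from it. -/
def redrawZero (x : Fin (n + 2)) (p : Fin (n + 1)) : Fin (n + 2) := if x = 0 then p.succ else x

lemma expect_expect_redrawZero (g : Fin (n + 2) → Fin (n + 2) → ℝ) :
    𝔼 x, 𝔼 p, g x (redrawZero x p) =
      (𝔼 p : Fin (n + 1), g 0 p.succ + (n + 1) * 𝔼 p : Fin (n + 1), g p.succ p.succ) / (n + 2) := by
  rw [Fintype.expect_eq_sum_div_card (fun x ↦ 𝔼 p, g x (redrawZero x p)), Fin.sum_univ_succ,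
    Fintype.expect_eq_sum_div_card (fun p : Fin (n + 1) ↦ g p.succ p.succ), Fintype.card_fin,
    Fintype.card_fin]
  simp only [redrawZero, if_true, Fin.succ_ne_zero, if_false, Fintype.expect_const]
  push_cast
  field_simp

section Extension

variable {Ω : Type*} [Fintype Ω] {P T : Ω → Perm (Fin (n + 1))}

lemma isCycleCoupling_extend (hPT : IsCycleCoupling P T) :
    IsCycleCoupling (Ω := Ω × Fin (n + 2) × Fin (n + 1))
      (fun ω ↦ decomposeFin.symm (ω.2.1, P ω.1))
      (fun ω ↦ decomposeFin.symm (redrawZero ω.2.1 ω.2.2, T ω.1)) where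
  expect_uniform h := by
    rw [← univ_product_univ, expect_product, expect_decomposeFin_symm,
      ← hPT.expect_uniform fun σ ↦ 𝔼 x, h (decomposeFin.symm (x, σ))]
    simp only [← univ_product_univ, expect_product, Fintype.expect_const]
  expect_cycle h := by
    rw [← univ_product_univ, expect_product, expect_cycleThrough_succ,
      ← hPT.expect_cycle fun σ ↦ 𝔼 p : Fin (n + 1), h (decomposeFin.symm (p.succ, σ))]
    refine expect_congr rfl fun ω _ ↦ ?_
    rw [← univ_product_univ, expect_product,
      expect_expect_redrawZero fun _ y ↦ h (decomposeFin.symm (y, T ω))]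
    field_simp
    ring

lemma expect_two_pow_hammingDist_extend_le (P T : Ω → Perm (Fin (n + 1))) :
    𝔼 ω : Ω × Fin (n + 2) × Fin (n + 1), (2 : ℝ) ^ hammingDist
        ⇑(decomposeFin.symm (redrawZero ω.2.1 ω.2.2, T ω.1)) (decomposeFin.symm (ω.2.1, P ω.1)) ≤
      (n + 5) / (n + 2) * 𝔼 ω, (2 : ℝ) ^ hammingDist ⇑(T ω) (P ω) := by
  rw [← univ_product_univ, expect_product, mul_expect]
  refine expect_le_expect fun ω _ ↦ ?_
  rw [← univ_product_univ, expect_product, expect_expect_redrawZero fun x y ↦ (2 : ℝ) ^ hammingDist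
    ⇑(decomposeFin.symm (y, T ω)) (decomposeFin.symm (x, P ω)), div_mul_eq_mul_div]
  set d := hammingDist ⇑(T ω) (P ω)
  have redrawn_le : 𝔼 p : Fin (n + 1), (2 : ℝ) ^ hammingDist
      ⇑(decomposeFin.symm (p.succ, T ω)) (decomposeFin.symm (0, P ω)) ≤ 2 ^ (d + 2) :=
    expect_le univ_nonempty fun p _ ↦
      pow_le_pow_right₀ one_le_two (hammingDist_decomposeFin_symm_zero_le _ _ _)
  have kept_le : 𝔼 p : Fin (n + 1), (2 : ℝ) ^ hammingDist
      ⇑(decomposeFin.symm (p.succ, T ω)) (decomposeFin.symm (p.succ, P ω)) ≤ 2 ^ d :=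
    expect_le univ_nonempty fun p _ ↦
      pow_le_pow_right₀ one_le_two (hammingDist_decomposeFin_symm_le _ _ _)
  gcongr
  calc _ ≤ 2 ^ (d + 2) + (n + 1) * (2 : ℝ) ^ d := by gcongr
    _ = (n + 5) * 2 ^ d := by ring

end Extension

lemma exists_isCycleCoupling (n : ℕ) :
    ∃ (Ω : Type) (_ : Fintype Ω) (_ : Nonempty Ω) (P T : Ω → Perm (Fin (n + 1))),
      IsCycleCoupling P T ∧
        𝔼 ω, (2 : ℝ) ^ hammingDist ⇑(T ω) (P ω) ≤ (n + 2) * (n + 3) * (n + 4) := by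
  induction n with
  | zero =>
    have eq_one (σ : Perm (Fin (0 + 1))) : σ = 1 := Subsingleton.elim (α := Perm (Fin 1)) σ 1
    refine ⟨Unit, inferInstance, inferInstance, 1, 1, ⟨fun h ↦ ?_, fun h ↦ ?_⟩, ?_⟩
    · simp [eq_one]
    · simp [eq_one (cycleThrough _)]
    · norm_num
  | succ n ih =>
    obtain ⟨Ω, _, _, P, T, hPT, moment_le⟩ := ih
    refine ⟨_, inferInstance, inferInstance, _, _, isCycleCoupling_extend hPT,
      (expect_two_pow_hammingDist_extend_le P T).trans ?_⟩
    calc _ ≤ ((n : ℝ) + 5) / (n + 2) * ((n + 2) * (n + 3) * (n + 4)) := by gcongr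
      _ = _ := by
        push_cast
        field_simp
        ring

end CycleCoupling

section CouplingTransfer

open Equiv

variable {Ω : Type*} [Fintype Ω] {X Y bad : Ω → ℝ} {ε η D : ℝ}

lemma uniformCDF_le_add_expect (bad_nonneg : ∀ ω, 0 ≤ bad ω)
    (close : ∀ ω, |X ω - Y ω| ≤ ε ∨ 1 ≤ bad ω) (x : ℝ) :
    uniformCDF X x ≤ uniformCDF Y (x + ε) + 𝔼 ω, bad ω := by
  rw [uniformCDF, uniformCDF, ← expect_add_distrib]
  refine expect_le_expect fun ω _ ↦ ?_
  have := bad_nonneg ω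
  rcases close ω with hω | hω
  · have := abs_le.1 hω
    split_ifs <;> linarith
  · split_ifs <;> linarith

lemma abs_uniformCDF_sub_stdNormalCDF_le_of_close (hε : 0 ≤ ε) (bad_nonneg : ∀ ω, 0 ≤ bad ω)
    (close : ∀ ω, |X ω - Y ω| ≤ ε ∨ 1 ≤ bad ω)
    (hY : ∀ z, |uniformCDF Y z - stdNormalCDF z| ≤ η) (x : ℝ) :
    |uniformCDF X x - stdNormalCDF x| ≤ η + ε + 𝔼 ω, bad ω := by
  have upper := uniformCDF_le_add_expect bad_nonneg close x
  have lower := uniformCDF_le_add_expect bad_nonneg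
    (fun ω ↦ by rw [abs_sub_comm]; exact close ω) (x - ε)
  rw [sub_add_cancel] at lower
  have cdf_right := stdNormalCDF_sub_le (le_add_of_nonneg_right hε : x ≤ x + ε)
  have cdf_left := stdNormalCDF_sub_le (sub_le_self x hε)
  have hY_right := abs_le.1 (hY (x + ε))
  have hY_left := abs_le.1 (hY (x - ε))
  rw [abs_le]
  constructor <;> linarith

lemma abs_uniformCDF_cycleThrough_sub_stdNormalCDF_le {n : ℕ} {X : Perm (Fin (n + 1)) → ℝ}
    (hD : 0 ≤ D) (lipschitz : ∀ σ τ, |X σ - X τ| ≤ D * hammingDist ⇑σ τ)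
    (hX : ∀ z, |uniformCDF X z - stdNormalCDF z| ≤ η) {t : ℝ} (ht : 0 ≤ t) (x : ℝ) :
    |uniformCDF (fun σ ↦ X (cycleThrough σ)) x - stdNormalCDF x| ≤
      η + D * t + (n + 2) * (n + 3) * (n + 4) / 2 ^ t := by
  obtain ⟨Ω, _, _, P, T, hPT, moment_le⟩ := exists_isCycleCoupling n
  have cdf_T : uniformCDF (fun σ ↦ X (cycleThrough σ)) = uniformCDF (X ∘ T) :=
    funext fun z ↦ (hPT.expect_cycle fun σ ↦ if X σ ≤ z then 1 else 0).symm
  have cdf_P : uniformCDF X = uniformCDF (X ∘ P) :=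
    funext fun z ↦ (hPT.expect_uniform fun σ ↦ if X σ ≤ z then 1 else 0).symm
  have close (ω : Ω) : |(X ∘ T) ω - (X ∘ P) ω| ≤ D * t ∨
      1 ≤ (2 : ℝ) ^ hammingDist ⇑(T ω) (P ω) / 2 ^ t := by
    rcases le_total (hammingDist ⇑(T ω) (P ω) : ℝ) t with near | far
    · exact .inl <| (lipschitz _ _).trans (by gcongr)
    · right
      rw [one_le_div (by positivity), ← Real.rpow_natCast]
      exact Real.rpow_le_rpow_of_exponent_le one_le_two far
  rw [cdf_T]
  rw [cdf_P] at hX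
  refine (abs_uniformCDF_sub_stdNormalCDF_le_of_close (by positivity) (fun ω ↦ by positivity)
    close hX x).trans ?_
  rw [← expect_div]
  gcongr

lemma abs_uniformCDF_hoeffdingStat_cycleThrough_sub_stdNormalCDF_le
    {n : ℕ} {a : Fin (n + 1) → Fin (n + 1) → ℝ} {V t : ℝ} (hV : 0 < V)
    (variance : 𝔼 σ, (hoeffdingStat a σ - 𝔼 τ, hoeffdingStat a τ) ^ 2 = V)
    (hD : ∀ i k l, |a i k - a i l| ≤ D) (ht : 0 ≤ t) (x : ℝ) :
    |uniformCDF (fun σ ↦ (hoeffdingStat a (cycleThrough σ) - 𝔼 τ, hoeffdingStat a τ) / √V) x -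
        stdNormalCDF x| ≤
      (54 + t) * (D / √V) + (n + 2) * (n + 3) * (n + 4) / 2 ^ t := by
  have D_nonneg : 0 ≤ D := (abs_nonneg _).trans (hD 0 0 0)
  set μ := 𝔼 τ, hoeffdingStat a τ
  have lipschitz (σ τ : Perm (Fin (n + 1))) :
      |(hoeffdingStat a σ - μ) / √V - (hoeffdingStat a τ - μ) / √V| ≤
        D / √V * hammingDist ⇑σ τ := by
    rw [← sub_div, sub_sub_sub_cancel_right, abs_div, abs_of_nonneg (Real.sqrt_nonneg _),
      div_mul_eq_mul_div]
    exact div_le_div_of_nonneg_right (abs_hoeffdingStat_sub_le hD σ τ) (Real.sqrt_nonneg _)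
  calc _ ≤ 54 * (D / √V) + D / √V * t + (n + 2) * (n + 3) * (n + 4) / 2 ^ t :=
        abs_uniformCDF_cycleThrough_sub_stdNormalCDF_le (by positivity) lipschitz
          (abs_uniformCDF_hoeffdingStat_sub_stdNormalCDF_le hV variance hD) ht x
    _ = _ := by ring

end CouplingTransfer

section BerryEsseen

variable {q : ℝ} {n : ℕ}

lemma abs_uniformCDF_oscStat_sub_stdNormalCDF_le (hq : 0 < q) (hn : 2 ≤ n) {t : ℝ} (ht : 0 ≤ t)
    (x : ℝ) :
    |uniformCDF (fun σ : Equiv.Perm (Fin n) ↦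
        (oscStat q σ - En (rhoq q (n := n))) / √(VarN (rhoq q (n := n)))) x - stdNormalCDF x| ≤
      (54 + t) * (((n : ℝ) - 1) ^ q / √(VarN (rhoq q (n := n)))) +
        (n + 1) * (n + 2) * (n + 3) / 2 ^ t := by
  obtain ⟨m, rfl⟩ := Nat.exists_eq_add_of_le' (one_le_two.trans hn)
  have variance_pos := VarN_rhoq_pos hq hn
  simp only [oscStat_eq_rhoq_cycleThrough]
  rw [rhoq_eq_hoeffdingStat] at variance_pos ⊢
  have bound := abs_uniformCDF_hoeffdingStat_cycleThrough_sub_stdNormalCDF_le variance_pos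
    (VarN_eq_expect _).symm (abs_spearmanMatrix_sub_le hq.le) ht x
  have cubic_eq : (((m + 1 : ℕ) : ℝ) + 1) * ((m + 1 : ℕ) + 2) * ((m + 1 : ℕ) + 3) =
      (m + 2) * (m + 3) * (m + 4) := by
    push_cast
    ring
  rwa [cubic_eq, En_eq_expect]

lemma half_le_log_natCast (hn : 2 ≤ n) : 1 / 2 ≤ Real.log n := by
  have := Real.log_le_log two_pos (Nat.ofNat_le_cast.2 hn)
  linarith [Real.log_two_gt_d9]

lemma logb_two_natCast_le (n : ℕ) : Real.logb 2 n ≤ 2 * Real.log n := by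
  rw [Real.logb, div_le_iff₀ (Real.log_pos one_lt_two)]
  nlinarith [Real.log_two_gt_d9, Real.log_natCast_nonneg n]

lemma cubic_div_two_rpow_logb_le (hn : 2 ≤ n) :
    ((n : ℝ) + 1) * (n + 2) * (n + 3) / 2 ^ (4 * Real.logb 2 n) ≤ 16 * Real.log n / √n := by
  have two_le : (2 : ℝ) ≤ n := mod_cast hn
  have rpow_eq : (2 : ℝ) ^ (4 * Real.logb 2 n) = n ^ 4 := by
    rw [mul_comm, Real.rpow_mul zero_le_two,
      Real.rpow_logb two_pos (by norm_num) (by positivity)]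
    norm_cast
  have cubic_le : ((n : ℝ) + 1) * (n + 2) * (n + 3) ≤ 8 * n ^ 3 := by
    nlinarith [mul_nonneg (sub_nonneg.2 two_le) (sq_nonneg (n : ℝ))]
  calc ((n : ℝ) + 1) * (n + 2) * (n + 3) / 2 ^ (4 * Real.logb 2 n)
      ≤ 8 * n ^ 3 / n ^ 4 := by
        rw [rpow_eq]
        exact div_le_div_of_nonneg_right cubic_le (by positivity)
    _ = 8 / n := by field_simp
    _ ≤ 8 / √n := by
        gcongr
        exact Real.sqrt_le_iff.2 ⟨by positivity, by nlinarith⟩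
    _ ≤ 16 * Real.log n / √n := by
        gcongr
        linarith [half_le_log_natCast hn]

theorem oscStat_berry_esseen_general (q : ℝ) (hq : 0 < q) :
    ∃ C : ℝ, ∀ n : ℕ, 2 ≤ n → ∀ x : ℝ,
      |Pn (fun σ : Equiv.Perm (Fin n) =>
          (oscStat q σ - En (rhoq q (n := n))) /
            Real.sqrt (VarN (rhoq q (n := n))) ≤ x) -
        stdNormalCDF x| ≤ C * Real.log n / Real.sqrt n := by
  set K : ℝ := 16 * 4 ^ q / (2 ^ q - 1)
  refine ⟨116 * K + 16, fun n hn x ↦ ?_⟩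
  have t_nonneg : 0 ≤ 4 * Real.logb 2 n :=
    mul_nonneg zero_le_four (Real.logb_nonneg one_lt_two (mod_cast (by omega : 1 ≤ n)))
  have scale_le := rpow_div_sqrt_VarN_rhoq_le hq hn
  have scale_nonneg := rpow_div_sqrt_VarN_rhoq_nonneg q (one_le_two.trans hn)
  rw [Pn_le_eq_uniformCDF]
  calc _ ≤ _ := abs_uniformCDF_oscStat_sub_stdNormalCDF_le hq hn t_nonneg x
    _ ≤ 116 * Real.log n * (K / √n) + 16 * Real.log n / √n := by
      refine add_le_add ?_ (cubic_div_two_rpow_logb_le hn)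
      gcongr
      linarith [half_le_log_natCast hn, logb_two_natCast_le n]
    _ = (116 * K + 16) * Real.log n / √n := by ring

end BerryEsseen

/-- Berry–Esseen bound for the oscillation statistic, normalized with the mean and
standard deviation of Spearman's `ρ_q`: the Kolmogorov distance to the standard
normal is `O(log n / √n)`. -/
theorem oscStat_berry_esseen (q : ℝ) (hq : 1 ≤ q) :
    ∃ C : ℝ, ∀ n : ℕ, 2 ≤ n → ∀ x : ℝ,
      |Pn (fun σ : Equiv.Perm (Fin n) =>
          (oscStat q σ - En (rhoq q (n := n))) /
            Real.sqrt (VarN (rhoq q (n := n))) ≤ x) -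
        stdNormalCDF x| ≤ C * Real.log n / Real.sqrt n := by
  exact oscStat_berry_esseen_general q (by linarith)
end
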